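/- arXiv:2012.08411 — 2 statements merged into one kernel-verified Lean document; each statement's English description precedes it below -/
import Mathlib

section
/- Let T be a linear operator on an md-dimensional vector space V over F_q, where m, d are positive integers. Then [((d−1)m,(d−2)m),((d−2)m,(d−3)m),…,(2m,m),(m,0)]_T is exactly the set of (d−1)-tuples (⊕_{i=0}^{d−2} T^i W, ⊕_{i=0}^{d−3} T^i W, …, W ⊕ TW, W) where W ranges over m-dimensional subspaces of V with ⊕_{i=0}^{d−1} T^i W = V. In particular, σ(m,d;T) = |[((d−1)m,(d−2)m),((d−2)m,(d−3)m),…,(2m,m),(m,0)]_T|. -/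
/-- The set `(a,b)_T` of subspaces `W` with `dim W = a` and `dim (W ∩ T⁻¹W) = b`. -/
def pairSet {F V : Type*} [Field F] [AddCommGroup V] [Module F V]
    (T : V →ₗ[F] V) (a b : ℕ) : Set (Submodule F V) :=
  {W | Module.finrank F W = a ∧ Module.finrank F ↥(W ⊓ W.comap T) = b}

/-- The set `[(a₁,₁,a₁,₂),…,(a_r,₁,a_r,₂)]_T`. -/
def tupleSet {F V : Type*} [Field F] [AddCommGroup V] [Module F V]
    (T : V →ₗ[F] V) (r : ℕ) (a : Fin r → ℕ × ℕ) : Set (Fin r → Submodule F V) :=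
  {W | (∀ i, W i ∈ pairSet T (a i).1 (a i).2) ∧
    ∀ (i : Fin r) (h : (i : ℕ) + 1 < r),
      W ⟨(i : ℕ) + 1, h⟩ ⊔ (W ⟨(i : ℕ) + 1, h⟩).map T ≤ W i}

/-- `W` is an `m`-dimensional `T`-splitting subspace: `V = W ⊕ TW ⊕ ⋯ ⊕ T^{d-1}W`. -/
def IsSplittingSubspace {F V : Type*} [Field F] [AddCommGroup V] [Module F V]
    (T : V →ₗ[F] V) (m d : ℕ) (W : Submodule F V) : Prop :=
  Module.finrank F W = m ∧
  iSupIndep (fun i : Fin d => W.map (T ^ (i : ℕ))) ∧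
  (⨆ i : Fin d, W.map (T ^ (i : ℕ))) = ⊤

/-- `σ(m,d;T)`, the number of `m`-dimensional `T`-splitting subspaces. -/
noncomputable def splitCount {F V : Type*} [Field F] [AddCommGroup V] [Module F V]
    (T : V →ₗ[F] V) (m d : ℕ) : ℕ :=
  Set.ncard {W : Submodule F V | IsSplittingSubspace T m d W}

/-!
Write `K n = W + TW + ⋯ + T^{n-1}W`, so that `K (n + 1) = K n + T (K n)` for `n > 0`. Every subspace
`U` satisfies `dim (U + TU) + dim (U ∩ T⁻¹U) = 2 dim U`, so the condition on `dim (U ∩ T⁻¹U)` in a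
tuple prescribes `dim (U + TU)`. The prescribed value is the dimension of the preceding subspace,
with the convention that `V` itself precedes the first one; hence the inclusions
`W_{i+1} + T W_{i+1} ⊆ W_i` are equalities, and the tuple consists of the spaces `K n` built from
its last entry. Conversely, `dim (K (n + 1)) ≤ dim (K n) + m` and `dim (K d) = md` force
`dim (K n) = nm` for all `n ≤ d`.
-/

open Module

section Finrank

variable {K V V' : Type*} [DivisionRing K] [AddCommGroup V] [Module K V] [AddCommGroup V']
  [Module K V']

theorem finrank_map_add_finrank_inf_ker (f : V →ₗ[K] V') (U : Submodule K V)
    [FiniteDimensional K U] :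
    finrank K (U.map f) + finrank K ↥(U ⊓ LinearMap.ker f) = finrank K U := by
  have h := (f.domRestrict U).finrank_range_add_finrank_ker
  rwa [LinearMap.range_domRestrict, LinearMap.ker_domRestrict,
    ← Submodule.finrank_map_subtype_eq, Submodule.map_comap_subtype] at h

theorem finrank_sup_map_add_finrank_inf_comap (f : V →ₗ[K] V') (U : Submodule K V)
    (U' : Submodule K V') [FiniteDimensional K U] [FiniteDimensional K U'] :
    finrank K ↥(U' ⊔ U.map f) + finrank K ↥(U ⊓ U'.comap f) = finrank K U + finrank K U' := by
  have grassmann := Submodule.finrank_sup_add_finrank_inf_eq U' (U.map f)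
  have rank_nullity := finrank_map_add_finrank_inf_ker f U
  have rank_nullity_inf := finrank_map_add_finrank_inf_ker f (U ⊓ U'.comap f)
  have map_inf : (U ⊓ U'.comap f).map f = U' ⊓ U.map f := by
    rw [← Submodule.map_inf_eq_map_inf_comap, inf_comm]
  have inf_ker : U ⊓ U'.comap f ⊓ LinearMap.ker f = U ⊓ LinearMap.ker f := by
    rw [inf_assoc, inf_eq_right.mpr (LinearMap.ker_le_comap f)]
  rw [map_inf, inf_ker] at rank_nullity_inf
  lia

theorem iSupIndep_of_sum_finrank_le_finrank_iSup {ι : Type*} [Fintype ι] (p : ι → Submodule K V)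
    [∀ i, FiniteDimensional K (p i)] (h : ∑ i, finrank K (p i) ≤ finrank K ↥(⨆ i, p i)) :
    iSupIndep p := by
  classical
  let e : (Π₀ i, p i) ≃ₗ[K] (Π i, p i) := DFinsupp.linearEquivFunOnFintype
  have : FiniteDimensional K (Π₀ i, p i) := e.symm.finiteDimensional
  let sum : (Π₀ i, p i) →ₗ[K] V := DFinsupp.lsum ℕ fun i => (p i).subtype
  have rank_nullity := sum.finrank_range_add_finrank_ker
  rw [← Submodule.iSup_eq_range_dfinsupp_lsum, e.finrank_eq, finrank_pi_fintype] at rank_nullity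
  have ker_eq_bot : LinearMap.ker sum = ⊥ := Submodule.finrank_eq_zero.mp (by lia)
  exact iSupIndep_of_dfinsupp_lsum_injective p (LinearMap.ker_eq_bot.mp ker_eq_bot)

end Finrank

section KrylovSubspace

variable {R M : Type*} [Semiring R] [AddCommMonoid M] [Module R M]

/-- The block Krylov subspace `W + TW + ⋯ + T^{n-1}W` generated by `W` under `T`. -/
def krylovSubspace (T : M →ₗ[R] M) (W : Submodule R M) (n : ℕ) : Submodule R M :=
  ⨆ i : Fin n, W.map (T ^ (i : ℕ))

variable (T : M →ₗ[R] M) (W : Submodule R M)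

theorem krylovSubspace_zero : krylovSubspace T W 0 = ⊥ :=
  iSup_of_empty _

theorem krylovSubspace_succ (n : ℕ) :
    krylovSubspace T W (n + 1) = krylovSubspace T W n ⊔ W.map (T ^ n) :=
  eq_of_forall_ge_iff fun U => by simp [krylovSubspace, Fin.forall_fin_succ']

theorem krylovSubspace_succ' (n : ℕ) :
    krylovSubspace T W (n + 1) = W ⊔ (krylovSubspace T W n).map T := by
  have map_pow_succ (i : ℕ) : W.map (T ^ (i + 1)) = (W.map (T ^ i)).map T := by
    rw [pow_succ', Module.End.mul_eq_comp, Submodule.map_comp]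
  refine eq_of_forall_ge_iff fun U => ?_
  simp [krylovSubspace, Fin.forall_fin_succ, Submodule.map_iSup, map_pow_succ,
    Module.End.one_eq_id]

theorem krylovSubspace_one : krylovSubspace T W 1 = W := by
  rw [krylovSubspace_succ', krylovSubspace_zero, Submodule.map_bot, sup_bot_eq]

theorem krylovSubspace_sup_map (n : ℕ) :
    krylovSubspace T W (n + 1) ⊔ (krylovSubspace T W (n + 1)).map T =
      krylovSubspace T W (n + 2) := by
  have le_succ : krylovSubspace T W (n + 1) ≤ krylovSubspace T W (n + 2) :=
    (krylovSubspace_succ T W (n + 1)).symm ▸ le_sup_left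
  have generator_le : W ≤ krylovSubspace T W (n + 1) :=
    (krylovSubspace_succ' T W n).symm ▸ le_sup_left
  rw [krylovSubspace_succ' T W (n + 1)] at le_succ ⊢
  exact le_antisymm (sup_le le_succ le_sup_right) (sup_le_sup_right generator_le _)

/-- The `r`-tuple `(W + ⋯ + T^{r-1}W, …, W + TW, W)` of block Krylov subspaces, listed in decreasing
order as in `tupleSet`. -/
def krylovTuple (r : ℕ) : Fin r → Submodule R M :=
  fun k => krylovSubspace T W (r - k)

theorem krylovTuple_last (r : ℕ) : krylovTuple T W (r + 1) (Fin.last r) = W := by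
  simp [krylovTuple, krylovSubspace_one]

theorem krylovTuple_succ (r : ℕ) :
    krylovTuple T W (r + 1) = Fin.cons (krylovSubspace T W (r + 1)) (krylovTuple T W r) := by
  ext1 i
  cases i using Fin.cases <;> simp [krylovTuple]

theorem krylovTuple_castSucc {r : ℕ} (i : Fin r) :
    krylovTuple T W (r + 1) i.castSucc =
      krylovTuple T W (r + 1) i.succ ⊔ (krylovTuple T W (r + 1) i.succ).map T := by
  obtain ⟨k, hk⟩ := Nat.exists_eq_add_of_lt i.isLt
  have castSucc_index : r + 1 - i.castSucc = k + 2 := by rw [Fin.val_castSucc]; lia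
  have succ_index : r + 1 - i.succ = k + 1 := by rw [Fin.val_succ]; lia
  rw [krylovTuple, krylovTuple, castSucc_index, succ_index, krylovSubspace_sup_map]

variable {T} in
theorem eq_krylovTuple_of_castSucc_eq {r : ℕ} {g : Fin (r + 1) → Submodule R M}
    (h : ∀ i : Fin r, g i.castSucc = g i.succ ⊔ (g i.succ).map T) :
    g = krylovTuple T (g (Fin.last r)) (r + 1) := by
  ext1 i
  induction i using Fin.reverseInduction with
  | last => rw [krylovTuple_last]
  | cast i ih => rw [h, ih, ← krylovTuple_castSucc]

theorem injOn_krylovTuple (r : ℕ) :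
    Set.InjOn (fun W => krylovTuple T W r) {W | krylovSubspace T W (r + 1) = ⊤} := by
  intro W hW W' hW' h
  rw [← krylovTuple_last T W r, ← krylovTuple_last T W' r, krylovTuple_succ, krylovTuple_succ,
    hW, hW']
  exact congrArg (fun f => Fin.cons ⊤ f (Fin.last r)) h

end KrylovSubspace

section Dimension

variable {K V : Type*} [DivisionRing K] [AddCommGroup V] [Module K V] (T : V →ₗ[K] V)
  (W : Submodule K V)

instance finiteDimensional_krylovSubspace [FiniteDimensional K W] (n : ℕ) :
    FiniteDimensional K (krylovSubspace T W n) :=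
  Submodule.finite_iSup _

theorem finrank_krylovSubspace_add_le [FiniteDimensional K W] (j k : ℕ) :
    finrank K (krylovSubspace T W (j + k)) ≤
      finrank K (krylovSubspace T W j) + k * finrank K W := by
  induction k with
  | zero => simp
  | succ k ih =>
    calc finrank K (krylovSubspace T W (j + (k + 1)))
      _ ≤ finrank K (krylovSubspace T W (j + k)) + finrank K (W.map (T ^ (j + k))) := by
        rw [← add_assoc, krylovSubspace_succ]
        exact Submodule.finrank_add_le_finrank_add_finrank _ _
      _ ≤ finrank K (krylovSubspace T W j) + k * finrank K W + finrank K W :=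
        add_le_add ih (Submodule.finrank_map_le _ _)
      _ = finrank K (krylovSubspace T W j) + (k + 1) * finrank K W := by ring

variable {T W} in
theorem finrank_krylovSubspace_of_eq_mul [FiniteDimensional K W] {d n : ℕ}
    (h : finrank K (krylovSubspace T W d) = d * finrank K W) (hn : n ≤ d) :
    finrank K (krylovSubspace T W n) = n * finrank K W := by
  obtain ⟨k, rfl⟩ := Nat.exists_eq_add_of_le hn
  have upper := finrank_krylovSubspace_add_le T W 0 n
  have lower := finrank_krylovSubspace_add_le T W n k
  rw [zero_add, krylovSubspace_zero, finrank_bot, zero_add] at upper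
  rw [h, add_mul] at lower
  lia

end Dimension

section Splitting

variable {F V : Type*} [Field F] [AddCommGroup V] [Module F V] {T : V →ₗ[F] V} {m : ℕ}

theorem isSplittingSubspace_iff_krylovSubspace_eq_top {d : ℕ} (hdim : finrank F V = m * d)
    {W : Submodule F V} [FiniteDimensional F W] :
    IsSplittingSubspace T m d W ↔ finrank F W = m ∧ krylovSubspace T W d = ⊤ := by
  refine ⟨fun ⟨hW, _, htop⟩ => ⟨hW, htop⟩, fun ⟨hW, htop⟩ => ⟨hW, ?_, htop⟩⟩
  apply iSupIndep_of_sum_finrank_le_finrank_iSup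
  calc ∑ i : Fin d, finrank F (W.map (T ^ (i : ℕ)))
    _ ≤ ∑ _i : Fin d, m := Finset.sum_le_sum fun i _ => hW ▸ Submodule.finrank_map_le _ W
    _ = finrank F V := by rw [Fin.sum_const, smul_eq_mul, mul_comm, hdim]
    _ = finrank F (krylovSubspace T W d) := by rw [htop, finrank_top]

theorem mem_pairSet_iff_finrank_sup_map {U : Submodule F V} [FiniteDimensional F U] {a b : ℕ} :
    U ∈ pairSet T a b ↔ finrank F U = a ∧ finrank F ↥(U ⊔ U.map T) + b = 2 * a := by
  have h := finrank_sup_map_add_finrank_inf_comap T U U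
  rw [pairSet, Set.mem_ofPred_eq]
  lia

theorem mem_pairSet_mul_iff {U : Submodule F V} [FiniteDimensional F U] {r i : ℕ} (hi : i < r) :
    U ∈ pairSet T ((r - i) * m) ((r - 1 - i) * m) ↔
      finrank F U = (r - i) * m ∧ finrank F ↥(U ⊔ U.map T) = (r + 1 - i) * m := by
  obtain ⟨k, rfl⟩ := Nat.exists_eq_add_of_lt hi
  have index : i + k + 1 - i = k + 1 := by lia
  have pred_index : i + k + 1 - 1 - i = k := by lia
  have succ_index : i + k + 1 + 1 - i = k + 2 := by lia
  rw [index, pred_index, succ_index, mem_pairSet_iff_finrank_sup_map]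
  grind

variable {r : ℕ} {f : Fin r → Submodule F V}

theorem mem_tupleSet_iff_cons_top {a : Fin r → ℕ × ℕ} :
    f ∈ tupleSet T r a ↔ (∀ i, f i ∈ pairSet T (a i).1 (a i).2) ∧
      ∀ i, f i ⊔ (f i).map T ≤ (Fin.cons ⊤ f : Fin (r + 1) → Submodule F V) i.castSucc := by
  refine and_congr_right fun _ => ?_
  cases r with
  | zero => simp
  | succ r =>
    have cons_top_iff : (∀ i, f i ⊔ (f i).map T ≤
          (Fin.cons ⊤ f : Fin (r + 2) → Submodule F V) i.castSucc) ↔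
        ∀ i : Fin r, f i.succ ⊔ (f i.succ).map T ≤ f i.castSucc := by
      simp [Fin.forall_fin_succ (n := r)]
    rw [cons_top_iff]
    exact ⟨fun h i => h i.castSucc (Nat.succ_lt_succ i.isLt),
      fun h i hi => h ⟨i, Nat.lt_of_succ_lt_succ hi⟩⟩

theorem mem_tupleSet_mul_iff [FiniteDimensional F V] (hdim : finrank F V = m * (r + 1))
    {g : Fin (r + 1) → Submodule F V} (hg : g = Fin.cons ⊤ f) :
    f ∈ tupleSet T r (fun i => ((r - (i : ℕ)) * m, (r - 1 - (i : ℕ)) * m)) ↔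
      (∀ i : Fin (r + 1), finrank F (g i) = (r + 1 - (i : ℕ)) * m) ∧
        ∀ i : Fin r, g i.castSucc = g i.succ ⊔ (g i.succ).map T := by
  have g_succ (i : Fin r) : g i.succ = f i := by rw [hg, Fin.cons_succ]
  have finrank_g_iff : (∀ i : Fin (r + 1), finrank F (g i) = (r + 1 - (i : ℕ)) * m) ↔
      ∀ i : Fin r, finrank F (f i) = (r - (i : ℕ)) * m := by
    have finrank_g_zero : finrank F (g 0) = m * (r + 1) := by
      rw [hg, Fin.cons_zero, finrank_top, hdim]
    have finrank_g_succ (i : Fin r) : finrank F (g i.succ) = finrank F (f i) := by rw [g_succ]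
    simp [Fin.forall_fin_succ (n := r), finrank_g_zero, finrank_g_succ, mul_comm]
  simp only [mem_tupleSet_iff_cons_top, mem_pairSet_mul_iff (Fin.isLt _), finrank_g_iff,
    forall_and, and_assoc, ← hg, g_succ]
  refine and_congr_right fun finrank_f => ?_
  have finrank_g := finrank_g_iff.mpr finrank_f
  constructor
  · rintro ⟨finrank_sup, sup_le⟩ i
    refine (Submodule.eq_of_le_of_finrank_eq (sup_le i) ?_).symm
    rw [finrank_sup, finrank_g, Fin.val_castSucc]
  · intro chain
    refine ⟨fun i => ?_, fun i => (chain i).ge⟩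
    rw [← chain, finrank_g, Fin.val_castSucc]

variable [FiniteDimensional F V]

theorem mapsTo_krylovTuple (hdim : finrank F V = m * (r + 1)) :
    Set.MapsTo (fun W => krylovTuple T W r) {W | IsSplittingSubspace T m (r + 1) W}
      (tupleSet T r (fun i => ((r - (i : ℕ)) * m, (r - 1 - (i : ℕ)) * m))) := by
  intro W hW
  obtain ⟨finrank_W, htop⟩ := (isSplittingSubspace_iff_krylovSubspace_eq_top hdim).mp hW
  refine (mem_tupleSet_mul_iff hdim (htop ▸ krylovTuple_succ T W r)).mpr
    ⟨fun i => ?_, krylovTuple_castSucc T W⟩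
  subst finrank_W
  apply finrank_krylovSubspace_of_eq_mul (d := r + 1) _ (Nat.sub_le _ _)
  rw [htop, finrank_top, hdim, mul_comm]

theorem surjOn_krylovTuple (hdim : finrank F V = m * (r + 1)) :
    Set.SurjOn (fun W => krylovTuple T W r) {W | IsSplittingSubspace T m (r + 1) W}
      (tupleSet T r (fun i => ((r - (i : ℕ)) * m, (r - 1 - (i : ℕ)) * m))) := by
  intro f hf
  obtain ⟨finrank_g, chain⟩ := (mem_tupleSet_mul_iff hdim rfl).mp hf
  set g : Fin (r + 1) → Submodule F V := Fin.cons ⊤ f with hg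
  have g_eq := eq_krylovTuple_of_castSucc_eq chain
  rw [krylovTuple_succ, hg, Fin.cons_inj, ← hg] at g_eq
  obtain ⟨htop, f_eq⟩ := g_eq
  refine ⟨g (Fin.last r), (isSplittingSubspace_iff_krylovSubspace_eq_top hdim).mpr
    ⟨?_, htop.symm⟩, f_eq.symm⟩
  simp [finrank_g]

end Splitting

theorem tupleSet_eq_splitting_general (F V : Type*) [Field F]
    [AddCommGroup V] [Module F V] [FiniteDimensional F V]
    (m d : ℕ) (hd : 0 < d) (hdim : Module.finrank F V = m * d) (T : V →ₗ[F] V) :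
    Set.BijOn (fun W => krylovTuple T W (d - 1)) {W | IsSplittingSubspace T m d W}
      (tupleSet T (d - 1) (fun i => ((d - 1 - (i : ℕ)) * m, (d - 2 - (i : ℕ)) * m))) := by
  obtain ⟨r, rfl⟩ := Nat.exists_eq_succ_of_ne_zero hd.ne'
  exact ⟨mapsTo_krylovTuple hdim, (injOn_krylovTuple T r).mono fun _ hW => hW.2.2,
    surjOn_krylovTuple hdim⟩

/-- `[((d−1)m,(d−2)m),…,(2m,m),(m,0)]_T` consists exactly of the tuples
`(⊕_{i<d-1} TⁱW, …, W ⊕ TW, W)` where `W` runs over `m`-dimensional subspaces with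
`V = W ⊕ TW ⊕ ⋯ ⊕ T^{d-1}W`; in particular `σ(m,d;T)` equals its cardinality. -/
theorem tupleSet_eq_splitting (F V : Type*) [Field F] [Fintype F]
    [AddCommGroup V] [Module F V] [FiniteDimensional F V]
    (m d : ℕ) (hm : 0 < m) (hd : 0 < d) (hdim : Module.finrank F V = m * d)
    (T : V →ₗ[F] V) :
    tupleSet T (d - 1) (fun i => ((d - 1 - (i : ℕ)) * m, (d - 2 - (i : ℕ)) * m)) =
      {f | ∃ W : Submodule F V, Module.finrank F W = m ∧
        iSupIndep (fun i : Fin d => W.map (T ^ (i : ℕ))) ∧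
        (⨆ i : Fin d, W.map (T ^ (i : ℕ))) = ⊤ ∧
        f = fun k : Fin (d - 1) => ⨆ i : Fin (d - 1 - (k : ℕ)), W.map (T ^ (i : ℕ))} ∧
    splitCount T m d =
      Set.ncard (tupleSet T (d - 1)
        (fun i => ((d - 1 - (i : ℕ)) * m, (d - 2 - (i : ℕ)) * m))) := by
  have h := tupleSet_eq_splitting_general F V m d hd hdim T
  refine ⟨?_, h.ncard_eq⟩
  rw [← h.image_eq]
  ext f
  exact ⟨fun ⟨W, ⟨hW, hindep, htop⟩, hf⟩ => ⟨W, hW, hindep, htop, hf.symm⟩,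
    fun ⟨W, hW, hindep, htop, hf⟩ => ⟨W, ⟨hW, hindep, htop⟩, hf.symm⟩⟩
end

section
/- Let T and T' be linear operators of the same similarity class type on md-dimensional vector spaces over F_q, where m, d are positive integers. Then σ(m,d;T) = σ(m,d;T'). -/
/-- `T` has similarity class type `τ`, where `τ` is a multiset of pairs
`(dᵢ, λᵢ)` with `dᵢ` the degree of a monic irreducible polynomial and `λᵢ` an
integer partition (a multiset of positive parts).  This holds when there is a
finite set `s` of distinct monic irreducible polynomials and partitions `lam p`
for `p ∈ s` such that `τ` is the multiset of pairs `(deg p, lam p)`, every monic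
irreducible polynomial outside `s` acts invertibly on `V` (no primary component),
and for `p ∈ s` the `p`-primary elementary divisors of `T` are given by `lam p`;
the latter is recorded by the (characterizing) kernel dimensions
`dim ker p(T)^j = deg p · Σ_{a ∈ lam p} min a j`. -/
def HasType {F V : Type*} [Field F] [AddCommGroup V] [Module F V]
    (τ : Multiset (ℕ × Multiset ℕ)) (T : V →ₗ[F] V) : Prop :=
  ∃ (s : Finset (Polynomial F)) (lam : Polynomial F → Multiset ℕ),
    (∀ p ∈ s, p.Monic ∧ Irreducible p) ∧
    (∀ p ∈ s, ∀ a ∈ lam p, 0 < a) ∧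
    τ = s.val.map (fun p => (p.natDegree, lam p)) ∧
    (∀ p ∈ s, ∀ j : ℕ,
      Module.finrank F ↥(LinearMap.ker (Polynomial.aeval T (p ^ j))) =
        p.natDegree * ((lam p).map (fun a => min a j)).sum) ∧
    (∀ p : Polynomial F, p.Monic → Irreducible p → p ∉ s →
      LinearMap.ker (Polynomial.aeval T p) = ⊥)

/-!
By finiteness, splitting subspaces of `T` can be counted through the tuples `w : Fin m → V` without
nonzero relation `∑ i, f i • w i = 0` whose coefficients `f i` have degree `< d`.

For such tuples consider the rank function `n ↦ dim {relations of degree < n}`. It is determined by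
the minimal degrees `k i` of a row-reduced basis of the relation lattice. Adjoining one more vector
`w` to a tuple `u` is an extension problem: relations of `u` modulo `⟨w⟩` lift to relations of
`(w, u)` up to a multiple of the annihilator of `w`, as for extensions of `⨁ O(-k i)` by `O(-c)` on
the projective line. As `u` runs over the lifts of a fixed tuple in `V ⧸ ⟨w⟩`, the extension class
is uniformly distributed, so by induction on `m` the distribution of the rank functions depends only
on the relation `x ∈ F[X] ∙ y` on `V`.

If `T` and `T'` have the same similarity class type, then, choosing `g` by Hensel lifting and the
Chinese remainder theorem so that it matches the primary components, `g(T)` is conjugate to `T'`.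
Hence there are additive bijections between the two modules, in both directions, which map cyclic
submodules into cyclic submodules; on finite modules such a bijection preserves `x ∈ F[X] ∙ y`
exactly.
-/

section Counting

theorem exists_equiv_of_equiv_fiber {α β γ δ ρ : Type*} (f : α → γ) (g : β → δ) (E : γ ≃ δ)
    {r : α → ρ} {r' : β → ρ}
    (h : ∀ c, ∃ L : {a // f a = c} ≃ {b // g b = E c}, ∀ a, r' (L a) = r a) :
    ∃ L : α ≃ β, ∀ a, r' (L a) = r a := by
  choose L hL using h
  refine ⟨(Equiv.sigmaFiberEquiv f).symm.trans ((E.sigmaCongr L).trans (Equiv.sigmaFiberEquiv g)),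
    fun a => ?_⟩
  exact hL _ ⟨a, rfl⟩

theorem exists_equiv_of_card_fiber_eq {α β γ : Type*} [Finite α] [Finite β] (f : α → γ)
    (g : β → γ) (h : ∀ c, Nat.card {a // f a = c} = Nat.card {b // g b = c}) :
    ∃ e : α ≃ β, ∀ a, g (e a) = f a := by
  refine exists_equiv_of_equiv_fiber f g (.refl γ) fun c => ?_
  let e : {a // f a = c} ≃ {b // g b = c} := (Finite.card_eq.1 (h c)).some
  exact ⟨e, fun a => (e a).2.trans a.2.symm⟩

theorem exists_equiv_add_eq_add_of_surjective {A B : Type*} [AddCommGroup A] [Finite A]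
    [AddCommGroup B] {f g : A →+ B} (hf : Function.Surjective f) (hg : Function.Surjective g)
    (b c : B) : ∃ e : A ≃ A, ∀ a, c + g (e a) = b + f a := by
  have card_fiber {f : A →+ B} (hf : Function.Surjective f) (b y : B) :
      Nat.card {a // b + f a = y} = Nat.card f.ker := by
    simp_rw [← eq_sub_iff_add_eq']
    exact Nat.card_congr (AddMonoidHom.fiberEquivKerOfSurjective hf _)
  have card_ker {f : A →+ B} (hf : Function.Surjective f) :
      Nat.card A = Nat.card B * Nat.card f.ker := by
    rw [f.ker.card_eq_card_quotient_mul_card_addSubgroup,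
      Nat.card_congr (QuotientAddGroup.quotientKerEquivOfSurjective f hf).toEquiv]
  have : Finite B := Finite.of_surjective _ hf
  refine exists_equiv_of_card_fiber_eq (b + f ·) (c + g ·) fun y => ?_
  rw [card_fiber hf, card_fiber hg]
  exact Nat.eq_of_mul_eq_mul_left Nat.card_pos ((card_ker hf).symm.trans (card_ker hg))

variable {ι ι' : Type*} [Fintype ι] [Fintype ι']

theorem card_fiber_add_two_mul_sum_tsub (k : ι → ℕ) (n : ℕ) :
    Nat.card {i // k i = n} + 2 * ∑ i, (n - k i) = ∑ i, (n + 1 - k i) + ∑ i, (n - 1 - k i) := by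
  rw [Nat.card_eq_fintype_card, Fintype.card_subtype, Finset.card_filter, Finset.mul_sum,
    ← Finset.sum_add_distrib, ← Finset.sum_add_distrib]
  exact Finset.sum_congr rfl fun i _ => by split_ifs <;> omega

theorem exists_equiv_of_sum_tsub_eq {k : ι → ℕ} {k' : ι' → ℕ}
    (h : ∀ d, ∑ i, (d - k i) = ∑ i, (d - k' i)) : ∃ e : ι ≃ ι', ∀ i, k' (e i) = k i :=
  exists_equiv_of_card_fiber_eq k k' fun n => by
    have hk := card_fiber_add_two_mul_sum_tsub k n
    have hk' := card_fiber_add_two_mul_sum_tsub k' n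
    rw [h, h, h] at hk
    omega

variable {α : Type*} [DecidableEq α]

theorem card_fiber_add_sum_min (p : ι → α) (e : ι → ℕ) (a : α) {j : ℕ} (hj : 0 < j) :
    Nat.card {i // (p i, e i) = (a, j)} +
        (∑ i with p i = a, min (e i) (j + 1) + ∑ i with p i = a, min (e i) (j - 1)) =
      2 * ∑ i with p i = a, min (e i) j := by
  rw [Nat.card_eq_fintype_card, Fintype.card_subtype, Finset.card_filter]
  simp_rw [Finset.sum_filter, Finset.mul_sum]
  rw [← Finset.sum_add_distrib, ← Finset.sum_add_distrib]
  refine Finset.sum_congr rfl fun i _ => ?_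
  by_cases hi : p i = a
  · simp only [hi, Prod.mk.injEq, true_and, if_true]
    split_ifs <;> omega
  · simp [hi]

theorem exists_equiv_of_sum_min_eq {p : ι → α} {p' : ι' → α} {e : ι → ℕ} {e' : ι' → ℕ}
    (he : ∀ i, 0 < e i) (he' : ∀ i, 0 < e' i)
    (h : ∀ a j, ∑ i with p i = a, min (e i) j = ∑ i with p' i = a, min (e' i) j) :
    ∃ E : ι ≃ ι', ∀ i, (p' (E i), e' (E i)) = (p i, e i) :=
  exists_equiv_of_card_fiber_eq (fun i => (p i, e i)) (fun i => (p' i, e' i)) fun ⟨a, j⟩ => by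
    obtain rfl | hj := j.eq_zero_or_pos
    · simp [(he _).ne', (he' _).ne']
    · have hp := card_fiber_add_sum_min p e a hj
      have hp' := card_fiber_add_sum_min p' e' a hj
      rw [h, h, h] at hp
      omega

end Counting

section RowReduced

open Polynomial Matrix

variable {F ι : Type*} [Field F]

theorem mem_degreeLT_iff_coeff_eq_zero {n : ℕ} {f : F[X]} :
    f ∈ degreeLT F n ↔ ∀ m, n ≤ m → f.coeff m = 0 := by
  rw [mem_degreeLT, degree_lt_iff_coeff_zero]

theorem mem_degreeLT_of_mem_succ_of_coeff_eq_zero {n : ℕ} {f : F[X]} (hf : f ∈ degreeLT F (n + 1))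
    (hn : f.coeff n = 0) : f ∈ degreeLT F n := by
  rw [mem_degreeLT_iff_coeff_eq_zero] at hf ⊢
  exact fun m hm => hm.eq_or_lt.elim (fun h => h ▸ hn) (hf m)

theorem mul_mem_degreeLT {a b : ℕ} {f g : F[X]} (hf : f ∈ degreeLT F (a - b))
    (hg : g ∈ degreeLT F (b + 1)) : f * g ∈ degreeLT F a := by
  by_cases h0 : f * g = 0
  · simp [h0]
  have hf0 := left_ne_zero_of_mul h0
  have hg0 := right_ne_zero_of_mul h0
  rw [mem_degreeLT, ← natDegree_lt_iff_degree_lt ‹_›] at *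
  rw [natDegree_mul hf0 hg0]
  omega

theorem mul_mem_degreeLT_iff {p g : F[X]} (hp : p.Monic) {d : ℕ} :
    p * g ∈ degreeLT F d ↔ g ∈ degreeLT F (d - p.natDegree) := by
  obtain rfl | hg := eq_or_ne g 0
  · simp
  rw [mem_degreeLT, mem_degreeLT, ← natDegree_lt_iff_degree_lt hg,
    ← natDegree_lt_iff_degree_lt (mul_ne_zero hp.ne_zero hg), natDegree_mul hp.ne_zero hg]
  omega

theorem finrank_degreeLT (n : ℕ) : Module.finrank F (degreeLT F n) = n := by
  rw [(degreeLTEquiv F n).finrank_eq, Module.finrank_fin_fun]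

variable (F) in
/-- The vectors of polynomials whose `i`-th entry has degree less than `n i`. -/
noncomputable def piDegreeLT (n : ι → ℕ) : Submodule F (ι → F[X]) :=
  Submodule.pi Set.univ fun i => degreeLT F (n i)

theorem mem_piDegreeLT {n : ι → ℕ} {f : ι → F[X]} :
    f ∈ piDegreeLT F n ↔ ∀ i, f i ∈ degreeLT F (n i) := by
  simp [piDegreeLT]

theorem piDegreeLT_mono {n n' : ι → ℕ} (h : n ≤ n') : piDegreeLT F n ≤ piDegreeLT F n' :=
  Submodule.pi_mono fun i _ => degreeLT_mono (h i)

/-- `piDegreeLT` as a product of spaces of polynomials of bounded degree. -/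
noncomputable def piDegreeLTEquiv (n : ι → ℕ) : piDegreeLT F n ≃ₗ[F] ∀ i, degreeLT F (n i) where
  toFun f i := ⟨f.1 i, mem_piDegreeLT.1 f.2 i⟩
  invFun f := ⟨fun i => f i, mem_piDegreeLT.2 fun i => (f i).2⟩
  map_add' _ _ := rfl
  map_smul' _ _ := rfl

instance [Finite ι] (n : ι → ℕ) : FiniteDimensional F (piDegreeLT F n) :=
  (piDegreeLTEquiv n).symm.finiteDimensional

theorem exists_mem_piDegreeLT [Finite ι] (f : ι → F[X]) : ∃ d, f ∈ piDegreeLT F fun _ => d := by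
  cases nonempty_fintype ι
  refine ⟨∑ i, ((f i).natDegree + 1), mem_piDegreeLT.2 fun i => ?_⟩
  have hi := Finset.single_le_sum (f := fun i => (f i).natDegree + 1)
    (fun _ _ => Nat.zero_le _) (Finset.mem_univ i)
  exact mem_degreeLT_iff_coeff_eq_zero.2 fun n hn => coeff_eq_zero_of_natDegree_lt (by omega)

variable [Fintype ι]

theorem finrank_piDegreeLT (n : ι → ℕ) : Module.finrank F (piDegreeLT F n) = ∑ i, n i := by
  simp_rw [(piDegreeLTEquiv n).finrank_eq, Module.finrank_pi_fintype, finrank_degreeLT]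

/-- The leading coefficients of a matrix of polynomials, the entries of whose `i`-th row are
regarded as polynomials of degree `k i`. -/
def rowLeadingMatrix (k : ι → ℕ) (v : Matrix ι ι F[X]) : Matrix ι ι F :=
  Matrix.of fun i j => (v i j).coeff (k i)

section Degree

variable {k : ι → ℕ} {v : Matrix ι ι F[X]} (hv : ∀ i, v i ∈ piDegreeLT F fun _ => k i + 1)
include hv

theorem vecMul_mem_piDegreeLT {h : ι → F[X]} {d : ℕ} (hh : h ∈ piDegreeLT F fun i => d - k i) :
    h ᵥ* v ∈ piDegreeLT F fun _ => d :=
  mem_piDegreeLT.2 fun j => Submodule.sum_mem _ fun i _ =>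
    mul_mem_degreeLT (mem_piDegreeLT.1 hh i) (mem_piDegreeLT.1 (hv i) j)

theorem coeff_vecMul {h : ι → F[X]} {d : ℕ} (hh : h ∈ piDegreeLT F fun i => d + 1 - k i) (j : ι) :
    ((h ᵥ* v) j).coeff d =
      ((fun i => if k i ≤ d then (h i).coeff (d - k i) else 0) ᵥ* rowLeadingMatrix k v) j := by
  simp only [vecMul, dotProduct, rowLeadingMatrix, of_apply, finsetSum_coeff]
  refine Finset.sum_congr rfl fun i _ => ?_
  have hvi := mem_piDegreeLT.1 (hv i) j
  have hhi := mem_piDegreeLT.1 hh i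
  rw [mem_degreeLT_iff_coeff_eq_zero] at hvi hhi
  split_ifs with hk
  · rw [← coeff_mul_add_eq_of_natDegree_le, Nat.sub_add_cancel hk]
    · exact natDegree_le_iff_coeff_eq_zero.2 fun n hn => hhi n (by omega)
    · exact natDegree_le_iff_coeff_eq_zero.2 hvi
  · have : h i = 0 := ext fun n => hhi n (by omega)
    simp [this]

theorem mulVec_mem_degreeLT {t : ι → F[X]} {e : ℕ} (ht : t ∈ piDegreeLT F fun _ => e) (i : ι) :
    (v *ᵥ t) i ∈ degreeLT F (k i + e) :=
  Submodule.sum_mem _ fun j _ => by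
    rw [mul_comm]
    exact mul_mem_degreeLT (by simpa using mem_piDegreeLT.1 ht j) (mem_piDegreeLT.1 (hv i) j)

theorem coeff_mulVec {t : ι → F[X]} {e : ℕ} (ht : t ∈ piDegreeLT F fun _ => e + 1) (i : ι) :
    ((v *ᵥ t) i).coeff (k i + e) = (rowLeadingMatrix k v *ᵥ fun j => (t j).coeff e) i := by
  simp only [mulVec, dotProduct, rowLeadingMatrix, of_apply, finsetSum_coeff]
  refine Finset.sum_congr rfl fun j _ => coeff_mul_add_eq_of_natDegree_le ?_ ?_
  · exact natDegree_le_iff_coeff_eq_zero.2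
      (mem_degreeLT_iff_coeff_eq_zero.1 (mem_piDegreeLT.1 (hv i) j))
  · exact natDegree_le_iff_coeff_eq_zero.2
      (mem_degreeLT_iff_coeff_eq_zero.1 (mem_piDegreeLT.1 ht j))

end Degree

variable [DecidableEq ι]

/-- A square matrix of polynomials is row reduced with row degrees `k` if the entries of its `i`-th
row have degree at most `k i` and the matrix of leading coefficients is invertible. -/
structure IsRowReduced (k : ι → ℕ) (v : Matrix ι ι F[X]) : Prop where
  row_mem_piDegreeLT : ∀ i, v i ∈ piDegreeLT F fun _ => k i + 1
  det_ne_zero : (rowLeadingMatrix k v).det ≠ 0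

namespace IsRowReduced

variable {k : ι → ℕ} {v : Matrix ι ι F[X]} (hv : IsRowReduced k v)
include hv

theorem eq_zero_of_vecMul_eq_zero {h : ι → F[X]} (h0 : h ᵥ* v = 0) : h = 0 := by
  have eq_zero_of_mem (e : ℕ) (he : h ∈ piDegreeLT F fun i => e - k i) : h = 0 := by
    induction e with
    | zero =>
      ext i n
      exact mem_degreeLT_iff_coeff_eq_zero.1 (mem_piDegreeLT.1 he i) n (by omega)
    | succ e ih =>
      have hlead := Matrix.eq_zero_of_vecMul_eq_zero hv.det_ne_zero <| funext fun j =>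
        (coeff_vecMul hv.row_mem_piDegreeLT he j).symm.trans (by simp [h0])
      refine ih (mem_piDegreeLT.2 fun i => ?_)
      have hi := mem_piDegreeLT.1 he i
      by_cases hk : k i ≤ e
      · rw [Nat.succ_sub hk] at hi
        exact mem_degreeLT_of_mem_succ_of_coeff_eq_zero hi (by simpa [hk] using congrFun hlead i)
      · exact degreeLT_mono (by omega) hi
  obtain ⟨d, hd⟩ := exists_mem_piDegreeLT h
  refine eq_zero_of_mem (d + ∑ i, k i) (piDegreeLT_mono (fun i => ?_) hd)
  change d ≤ d + ∑ i, k i - k i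
  have : k i ≤ ∑ i, k i := Finset.single_le_sum (fun _ _ => Nat.zero_le _) (Finset.mem_univ i)
  omega

theorem vecMul_injective : Function.Injective fun h : ι → F[X] => h ᵥ* v := fun a b hab =>
  sub_eq_zero.1 <| hv.eq_zero_of_vecMul_eq_zero <| by
    simpa [sub_vecMul, sub_eq_zero] using hab

theorem exists_sub_mulVec_mem_piDegreeLT (y : ι → F[X]) :
    ∃ t, y - v *ᵥ t ∈ piDegreeLT F k := by
  have exists_of_mem (e : ℕ) : ∀ y ∈ piDegreeLT F fun i => k i + e,
      ∃ t, y - v *ᵥ t ∈ piDegreeLT F k := by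
    induction e with
    | zero => exact fun y hy => ⟨0, by simpa using hy⟩
    | succ e ih =>
      intro y hy
      set b : ι → F := (rowLeadingMatrix k v)⁻¹ *ᵥ fun i => (y i).coeff (k i + e)
      have hb : rowLeadingMatrix k v *ᵥ b = fun i => (y i).coeff (k i + e) := by
        rw [mulVec_mulVec, mul_nonsing_inv _ (isUnit_iff_ne_zero.2 hv.det_ne_zero), one_mulVec]
      set t₀ : ι → F[X] := fun j => C (b j) * X ^ e with ht₀
      have ht₀_mem : t₀ ∈ piDegreeLT F fun _ => e + 1 := mem_piDegreeLT.2 fun j => by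
        rw [mem_degreeLT]
        exact (degree_C_mul_X_pow_le e (b j)).trans_lt (by exact_mod_cast e.lt_succ_self)
      have hsub : y - v *ᵥ t₀ ∈ piDegreeLT F fun i => k i + e := mem_piDegreeLT.2 fun i => by
        refine mem_degreeLT_of_mem_succ_of_coeff_eq_zero (sub_mem (mem_piDegreeLT.1 hy i)
          (mulVec_mem_degreeLT hv.row_mem_piDegreeLT ht₀_mem i)) ?_
        rw [Pi.sub_apply, coeff_sub, coeff_mulVec hv.row_mem_piDegreeLT ht₀_mem, sub_eq_zero]
        simpa [ht₀] using (congrFun hb i).symm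
      obtain ⟨t, ht⟩ := ih _ hsub
      exact ⟨t₀ + t, by rwa [mulVec_add, ← sub_sub]⟩
  obtain ⟨d, hd⟩ := exists_mem_piDegreeLT y
  exact exists_of_mem d y (piDegreeLT_mono (fun i => Nat.le_add_left d (k i)) hd)

theorem update {f : ι → F[X]} {d : ℕ} (hf : f ∈ piDegreeLT F fun _ => d + 1) {i : ι}
    (hi : ((fun j => (f j).coeff d) ᵥ* (rowLeadingMatrix k v)⁻¹) i ≠ 0) :
    IsRowReduced (Function.update k i d) (v.updateRow i f) where
  row_mem_piDegreeLT l := by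
    by_cases hl : l = i
    · subst hl
      simpa [updateRow_self] using hf
    · simpa [hl, updateRow_ne] using hv.row_mem_piDegreeLT l
  det_ne_zero := by
    set a := (fun j => (f j).coeff d) ᵥ* (rowLeadingMatrix k v)⁻¹ with ha
    have haf : a ᵥ* rowLeadingMatrix k v = fun j => (f j).coeff d := by
      rw [ha, vecMul_vecMul, nonsing_inv_mul _ (isUnit_iff_ne_zero.2 hv.det_ne_zero), vecMul_one]
    have hlead : rowLeadingMatrix (Function.update k i d) (v.updateRow i f) =
        (rowLeadingMatrix k v).updateRow i (∑ l, a l • rowLeadingMatrix k v l) := by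
      rw [← vecMul_eq_sum, haf]
      ext l j
      by_cases hl : l = i
      · subst hl
        simp [rowLeadingMatrix]
      · simp [rowLeadingMatrix, hl]
    rw [hlead, det_updateRow_sum]
    exact mul_ne_zero hi hv.det_ne_zero

theorem submatrix (e : ι ≃ ι) : IsRowReduced (k ∘ e) (v.submatrix e id) where
  row_mem_piDegreeLT i := hv.row_mem_piDegreeLT (e i)
  det_ne_zero := by
    change ((rowLeadingMatrix k v).submatrix e id).det ≠ 0
    rw [det_permute]
    refine mul_ne_zero ?_ hv.det_ne_zero
    obtain h | h := Int.units_eq_one_or (Equiv.Perm.sign e) <;> simp [h]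

theorem exists_vecMul_eq_of_forall_lt {K : Submodule F[X] (ι → F[X])} (hvK : ∀ i, v i ∈ K)
    (hmin : ∀ d, ∀ f ∈ K, f ∈ piDegreeLT F (fun _ => d + 1) → ∀ i, d < k i →
      ((fun j => (f j).coeff d) ᵥ* (rowLeadingMatrix k v)⁻¹) i = 0) (d : ℕ) {f : ι → F[X]}
    (hfK : f ∈ K) (hf : f ∈ piDegreeLT F fun _ => d) :
    ∃ h ∈ piDegreeLT F fun i => d - k i, h ᵥ* v = f := by
  induction d generalizing f with
  | zero =>
    refine ⟨0, zero_mem _, ?_⟩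
    ext j n
    simpa using (mem_degreeLT_iff_coeff_eq_zero.1 (mem_piDegreeLT.1 hf j) n n.zero_le).symm
  | succ d ih =>
    set a := (fun j => (f j).coeff d) ᵥ* (rowLeadingMatrix k v)⁻¹ with ha
    have haf : a ᵥ* rowLeadingMatrix k v = fun j => (f j).coeff d := by
      rw [ha, vecMul_vecMul, nonsing_inv_mul _ (isUnit_iff_ne_zero.2 hv.det_ne_zero), vecMul_one]
    have ha_eq_zero : ∀ i, d < k i → a i = 0 := hmin d f hfK hf
    set h₀ : ι → F[X] := fun i => C (a i) * X ^ (d - k i) with hh₀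
    have hh₀_mem : h₀ ∈ piDegreeLT F fun i => d + 1 - k i := mem_piDegreeLT.2 fun i => by
      obtain hi | hi := le_or_gt (k i) d
      · rw [mem_degreeLT, Nat.succ_sub hi]
        exact (degree_C_mul_X_pow_le _ _).trans_lt (by exact_mod_cast Nat.lt_succ_self _)
      · simp [hh₀, ha_eq_zero i hi]
    have hlead : (fun i => if k i ≤ d then (h₀ i).coeff (d - k i) else 0) = a := funext fun i => by
      obtain hi | hi := le_or_gt (k i) d
      · simp [hh₀, hi]
      · simp [hi.not_ge, ha_eq_zero i hi]
    have hsub : f - h₀ ᵥ* v ∈ piDegreeLT F fun _ => d := mem_piDegreeLT.2 fun j => by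
      refine mem_degreeLT_of_mem_succ_of_coeff_eq_zero (sub_mem (mem_piDegreeLT.1 hf j)
        (mem_piDegreeLT.1 (vecMul_mem_piDegreeLT hv.row_mem_piDegreeLT hh₀_mem) j)) ?_
      rw [Pi.sub_apply, coeff_sub, coeff_vecMul hv.row_mem_piDegreeLT hh₀_mem, hlead, haf, sub_self]
    have hK : h₀ ᵥ* v ∈ K := by
      rw [vecMul_eq_sum]
      exact sum_mem fun i _ => K.smul_mem _ (hvK i)
    obtain ⟨h, hh, hhf⟩ := ih (sub_mem hfK hK) hsub
    exact ⟨h + h₀, add_mem (piDegreeLT_mono (fun i => by dsimp; omega) hh) hh₀_mem, by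
      rw [add_vecMul, hhf, sub_add_cancel]⟩

end IsRowReduced

/-- The vectors in the polynomial lattice `K` all of whose entries have degree less than `d`. -/
noncomputable def degreeLTPart (K : Submodule F[X] (ι → F[X])) (d : ℕ) :
    Submodule F (ι → F[X]) :=
  K.restrictScalars F ⊓ piDegreeLT F fun _ => d

instance {ι : Type*} [Finite ι] (K : Submodule F[X] (ι → F[X])) (d : ℕ) :
    FiniteDimensional F (degreeLTPart K d) :=
  Submodule.finiteDimensional_of_le inf_le_right

/-- A reduced basis of the polynomial lattice `K`: a row reduced matrix with rows in `K` such that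
each vector of `K` is a combination of the rows without cancellation of degrees. -/
structure IsReducedBasis (K : Submodule F[X] (ι → F[X])) (k : ι → ℕ) (v : Matrix ι ι F[X]) : Prop
    extends IsRowReduced k v where
  row_mem : ∀ i, v i ∈ K
  exists_vecMul_eq : ∀ {d : ℕ} {f : ι → F[X]}, f ∈ degreeLTPart K d →
    ∃ h ∈ piDegreeLT F fun i => d - k i, h ᵥ* v = f

-- Among the row reduced matrices with rows in `K`, one with minimal sum of row degrees works: any
-- vector of `K` whose leading term is not reached could be exchanged for a row of larger degree.
theorem exists_isReducedBasis {K : Submodule F[X] (ι → F[X])} {p : F[X]} (hp : p.Monic)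
    (hpK : ∀ i, Pi.single i p ∈ K) : ∃ k v, IsReducedBasis K k v := by
  have hdiag : IsRowReduced (fun _ => p.natDegree) (of fun i : ι => Pi.single i p) := by
    refine ⟨fun i => mem_piDegreeLT.2 fun j => ?_, ?_⟩
    · obtain rfl | hij := eq_or_ne i j
      · rw [of_apply, Pi.single_eq_same, mem_degreeLT]
        exact degree_le_natDegree.trans_lt (by exact_mod_cast Nat.lt_succ_self _)
      · simp [hij.symm]
    · have : rowLeadingMatrix (fun _ => p.natDegree) (of fun i : ι => Pi.single i p) = 1 := by
        ext i j
        obtain rfl | hij := eq_or_ne i j <;> simp [rowLeadingMatrix, *, hp.coeff_natDegree]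
      simp [this]
  let rowDegreeSums := {n | ∃ k v, (∀ i, v i ∈ K) ∧ IsRowReduced k v ∧ ∑ i, k i = n}
  have hne : rowDegreeSums.Nonempty := ⟨_, _, _, hpK, hdiag, rfl⟩
  obtain ⟨k, v, hvK, hv, hk⟩ := Nat.sInf_mem hne
  refine ⟨k, v, hv, hvK, fun hf => hv.exists_vecMul_eq_of_forall_lt hvK ?_ _ hf.1 hf.2⟩
  intro d f hfK hf i hdi
  by_contra hi
  have hrows : ∀ l, v.updateRow i f l ∈ K := fun l => by
    obtain rfl | hl := eq_or_ne l i
    · simpa using hfK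
    · simpa [hl] using hvK l
  have hle : ∑ l, k l ≤ ∑ l, Function.update k i d l :=
    hk.trans_le (Nat.sInf_le ⟨_, _, hrows, hv.update hf hi, rfl⟩)
  exact hle.not_gt (Fintype.sum_strictMono (update_lt_self_iff.2 hdi))

namespace IsReducedBasis

variable {K : Submodule F[X] (ι → F[X])} {k : ι → ℕ} {v : Matrix ι ι F[X]}
  (hv : IsReducedBasis K k v)
include hv

theorem submatrix (e : ι ≃ ι) : IsReducedBasis K (k ∘ e) (v.submatrix e id) where
  toIsRowReduced := hv.toIsRowReduced.submatrix e
  row_mem i := hv.row_mem (e i)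
  exists_vecMul_eq hf := by
    obtain ⟨h, hh, rfl⟩ := hv.exists_vecMul_eq hf
    refine ⟨h ∘ e, mem_piDegreeLT.2 fun i => mem_piDegreeLT.1 hh (e i), ?_⟩
    simp [submatrix_vecMul_equiv, Function.comp_assoc]

theorem degreeLTPart_eq_map (d : ℕ) :
    degreeLTPart K d = (piDegreeLT F fun i => d - k i).map (v.vecMulLinear.restrictScalars F) := by
  refine le_antisymm (fun f hf => hv.exists_vecMul_eq hf) ?_
  rintro _ ⟨h, hh, rfl⟩
  refine ⟨?_, vecMul_mem_piDegreeLT hv.row_mem_piDegreeLT hh⟩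
  change h ᵥ* v ∈ K
  rw [vecMul_eq_sum]
  exact sum_mem fun i _ => K.smul_mem _ (hv.row_mem i)

theorem finrank_degreeLTPart (d : ℕ) :
    Module.finrank F (degreeLTPart K d) = ∑ i, (d - k i) := by
  rw [hv.degreeLTPart_eq_map, ← finrank_piDegreeLT (F := F)]
  exact (Submodule.equivMapOfInjective (v.vecMulLinear.restrictScalars F) hv.vecMul_injective
    _).finrank_eq.symm

end IsReducedBasis

end RowReduced

section TailSeq

open Polynomial

variable {F : Type*} [Field F]

/-- The coefficients of the principal part at infinity of the rational function `g / p`: for monic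
`p`, the `j`-th entry is the coefficient of `X⁻¹ ^ (j + 1)` in the Laurent expansion of `g / p`. -/
noncomputable def tailSeq (p : F[X]) : F[X] →ₗ[F] ℕ → F :=
  LinearMap.pi fun j =>
    lcoeff F (p.natDegree - 1) ∘ₗ modByMonicHom p ∘ₗ LinearMap.mulLeft F (X ^ j)

theorem tailSeq_apply (p g : F[X]) (j : ℕ) :
    tailSeq p g j = ((X ^ j * g) %ₘ p).coeff (p.natDegree - 1) :=
  rfl

theorem tailSeq_mul (p g : F[X]) {n : ℕ} {h : F[X]} (hh : h ∈ degreeLT F n) (j : ℕ) :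
    tailSeq p (h * g) j = ∑ t ∈ Finset.range n, h.coeff t * tailSeq p g (j + t) := by
  have hsum : h * g = ∑ t ∈ Finset.range n, h.coeff t • (X ^ t * g) := by
    have hn : h = ∑ t ∈ Finset.range n, C (h.coeff t) * X ^ t := by
      ext m
      simp only [finsetSum_coeff, coeff_C_mul_X_pow, Finset.sum_ite_eq, Finset.mem_range]
      exact (ite_eq_left_iff.2 fun hm =>
        (mem_degreeLT_iff_coeff_eq_zero.1 hh m (not_lt.1 hm)).symm).symm
    conv_lhs => rw [hn, Finset.sum_mul]
    exact Finset.sum_congr rfl fun t _ => by rw [mul_assoc, C_mul']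
  rw [hsum, map_sum, Finset.sum_apply]
  refine Finset.sum_congr rfl fun t _ => ?_
  rw [map_smul, Pi.smul_apply, smul_eq_mul, tailSeq_apply, tailSeq_apply, pow_add, mul_assoc]

theorem dvd_sub_modByMonic (p g : F[X]) : p ∣ g - g %ₘ p :=
  ⟨g /ₘ p, sub_eq_of_eq_add' (modByMonic_add_div g p).symm⟩

variable {p : F[X]} (hp : p.Monic)
include hp

theorem tailSeq_eq_zero_of_dvd {g : F[X]} (hg : p ∣ g) : tailSeq p g = 0 := by
  ext j
  rw [tailSeq_apply, (modByMonic_eq_zero_iff_dvd hp).2 (hg.mul_left _), coeff_zero, Pi.zero_apply]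

theorem tailSeq_eq_of_dvd_sub {g h : F[X]} (hgh : p ∣ g - h) : tailSeq p g = tailSeq p h := by
  rw [← sub_eq_zero, ← map_sub, tailSeq_eq_zero_of_dvd hp hgh]

theorem modByMonic_mem_degreeLT (g : F[X]) : g %ₘ p ∈ degreeLT F p.natDegree := by
  rw [mem_degreeLT, ← degree_eq_natDegree hp.ne_zero]
  exact degree_modByMonic_lt g hp

theorem modByMonic_eq_self_of_mem_degreeLT {g : F[X]} (hg : g ∈ degreeLT F p.natDegree) :
    g %ₘ p = g := by
  rwa [modByMonic_eq_self_iff hp, degree_eq_natDegree hp.ne_zero, ← mem_degreeLT]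

theorem tailSeq_apply_of_mem_degreeLT {n j : ℕ} {g : F[X]} (hg : g ∈ degreeLT F n)
    (hn : j + n ≤ p.natDegree) (hj : j < p.natDegree) :
    tailSeq p g j = g.coeff (p.natDegree - 1 - j) := by
  have hmem : X ^ j * g ∈ degreeLT F p.natDegree := mem_degreeLT_iff_coeff_eq_zero.2 fun m hm => by
    rw [coeff_X_pow_mul', if_pos (by omega)]
    exact mem_degreeLT_iff_coeff_eq_zero.1 hg _ (by omega)
  rw [tailSeq_apply, modByMonic_eq_self_of_mem_degreeLT hp hmem, coeff_X_pow_mul',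
    if_pos (by omega)]

theorem exists_mem_degreeLT_dvd_sub_iff {d : ℕ} {g : F[X]} :
    (∃ g' ∈ degreeLT F d, p ∣ g - g') ↔ ∀ j, j + d < p.natDegree → tailSeq p g j = 0 := by
  refine ⟨fun ⟨g', hg', hdvd⟩ j hj => ?_, fun H => ⟨g %ₘ p, ?_, dvd_sub_modByMonic p g⟩⟩
  · rw [tailSeq_eq_of_dvd_sub hp hdvd, tailSeq_apply_of_mem_degreeLT hp hg' hj.le (by omega)]
    exact mem_degreeLT_iff_coeff_eq_zero.1 hg' _ (by omega)
  · have mem_of_le (j : ℕ) (hj : j + d ≤ p.natDegree) : g %ₘ p ∈ degreeLT F (p.natDegree - j) := by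
      induction j with
      | zero => exact modByMonic_mem_degreeLT hp g
      | succ j ih =>
        have ih := ih (by omega)
        have h0 := H j (by omega)
        rw [tailSeq_eq_of_dvd_sub hp (dvd_sub_modByMonic p g),
          tailSeq_apply_of_mem_degreeLT hp ih (by omega) (by omega)] at h0
        refine mem_degreeLT_of_mem_succ_of_coeff_eq_zero ?_ ?_
        · convert ih using 2
          omega
        · convert h0 using 2
          omega
    obtain hd | hd := le_total d p.natDegree
    · have := mem_of_le (p.natDegree - d) (by omega)
      rwa [Nat.sub_sub_self hd] at this
    · exact degreeLT_mono hd (modByMonic_mem_degreeLT hp g)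

theorem exists_tailSeq_eq (a : ℕ → F) : ∃ g, ∀ j < p.natDegree, tailSeq p g j = a j := by
  let tail : degreeLT F p.natDegree →ₗ[F] Fin p.natDegree → F :=
    LinearMap.funLeft F F Fin.val ∘ₗ tailSeq p ∘ₗ (degreeLT F p.natDegree).subtype
  have hinj : Function.Injective tail := by
    refine LinearMap.ker_eq_bot.1 (LinearMap.ker_eq_bot'.2 fun g hg => Subtype.ext ?_)
    obtain ⟨g', hg', hdvd⟩ := (exists_mem_degreeLT_dvd_sub_iff hp (d := 0) (g := g)).2
      fun j hj => congrFun hg ⟨j, hj⟩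
    have hg'0 : g' = 0 := ext fun n => mem_degreeLT_iff_coeff_eq_zero.1 hg' n n.zero_le
    rw [hg'0, sub_zero, ← modByMonic_eq_zero_iff_dvd hp] at hdvd
    exact (modByMonic_eq_self_of_mem_degreeLT hp g.2).symm.trans hdvd
  have hsurj := (LinearMap.injective_iff_surjective_of_finrank_eq_finrank
    (degreeLTEquiv F p.natDegree).finrank_eq).1 hinj
  obtain ⟨g, hg⟩ := hsurj fun j => a j
  exact ⟨g, fun j hj => congrFun hg ⟨j, hj⟩⟩

end TailSeq

section Relations

open Polynomial Matrix

variable {F V ι : Type*} [Field F] [AddCommGroup V] [Module F[X] V] [Fintype ι]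

variable (F) in
/-- The lattice of `F[X]`-linear relations between the vectors `w i`. -/
noncomputable def relations (w : ι → V) : Submodule F[X] (ι → F[X]) :=
  LinearMap.ker (Fintype.linearCombination F[X] w)

theorem mem_relations {w : ι → V} {f : ι → F[X]} : f ∈ relations F w ↔ ∑ i, f i • w i = 0 := by
  rw [relations, LinearMap.mem_ker, Fintype.linearCombination_apply]

variable (F) in
/-- The dimension of the space of relations between the `w i` with coefficients of degree less
than `d`. As a function of `d` it determines the row degrees of a reduced basis of
`relations F w`. -/
noncomputable def relationRank (w : ι → V) (d : ℕ) : ℕ :=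
  Module.finrank F (degreeLTPart (relations F w) d)

/-- The coefficient vectors `h`, with `h i` of degree less than `d - k i`, satisfying the Hankel
type equations with data `θ`. For `θ i = tailSeq p (G i)` and `p` of degree `c`, the equations say
that `∑ i, h i * G i` is congruent modulo `p` to a polynomial of degree less than `d`. -/
noncomputable def extensionSolutions (c : ℕ) (k : ι → ℕ) (θ : ι → ℕ → F) (d : ℕ) :
    Submodule F (ι → F[X]) :=
  piDegreeLT F (fun i => d - k i) ⊓
    ⨅ j : {j : ℕ // j + d < c}, LinearMap.ker
      (∑ i, ∑ t ∈ Finset.range (d - k i), θ i (j + t) • (lcoeff F t ∘ₗ LinearMap.proj i))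

theorem mem_extensionSolutions {c : ℕ} {k : ι → ℕ} {θ : ι → ℕ → F} {d : ℕ} {h : ι → F[X]} :
    h ∈ extensionSolutions c k θ d ↔ h ∈ piDegreeLT F (fun i => d - k i) ∧
      ∀ j, j + d < c → ∑ i, ∑ t ∈ Finset.range (d - k i), (h i).coeff t * θ i (j + t) = 0 := by
  simp [extensionSolutions, mul_comm]

theorem extensionSolutions_congr {c : ℕ} {k : ι → ℕ} {θ θ' : ι → ℕ → F}
    (hθ : ∀ i, ∀ j < c - k i, θ i j = θ' i j) :
    extensionSolutions c k θ = extensionSolutions c k θ' := by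
  ext d h
  rw [mem_extensionSolutions, mem_extensionSolutions]
  refine and_congr_right fun _ => forall₂_congr fun j hj => ?_
  suffices ∀ i, ∀ t ∈ Finset.range (d - k i), θ i (j + t) = θ' i (j + t) by
    rw [Finset.sum_congr rfl fun i _ => Finset.sum_congr rfl fun t ht => by rw [this i t ht]]
  exact fun i t ht => hθ i _ (by have := Finset.mem_range.1 ht; omega)

theorem mem_extensionSolutions_tailSeq_iff {p : F[X]} (hp : p.Monic) {k : ι → ℕ} {G : ι → F[X]}
    {d : ℕ} {h : ι → F[X]} :
    h ∈ extensionSolutions p.natDegree k (fun i => tailSeq p (G i)) d ↔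
      h ∈ piDegreeLT F (fun i => d - k i) ∧ ∃ g ∈ degreeLT F d, p ∣ h ⬝ᵥ G - g := by
  rw [mem_extensionSolutions, exists_mem_degreeLT_dvd_sub_iff hp]
  refine and_congr_right fun hh => forall₂_congr fun j _ => ?_
  rw [dotProduct, map_sum, Finset.sum_apply,
    Finset.sum_congr rfl fun i _ => tailSeq_mul p (G i) (mem_piDegreeLT.1 hh i) j]

theorem finrank_map_add_finrank_inf_ker_s6 {K M N : Type*} [DivisionRing K] [AddCommGroup M]
    [Module K M] [AddCommGroup N] [Module K N] (D : Submodule K M) [FiniteDimensional K D]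
    (f : M →ₗ[K] N) :
    Module.finrank K (D.map f) + Module.finrank K (D ⊓ LinearMap.ker f : Submodule K M) =
      Module.finrank K D := by
  rw [← LinearMap.finrank_range_add_finrank_ker (f.domRestrict D), LinearMap.range_domRestrict,
    LinearMap.ker_domRestrict, ← Submodule.map_comap_subtype]
  congr 1
  exact (Submodule.equivSubtypeMap D _).finrank_eq.symm

section Cons

variable {m : ℕ} {w : V} {u : Fin m → V}

theorem mem_relations_mk_iff {f : Fin m → F[X]} :
    f ∈ relations F (Submodule.Quotient.mk (p := F[X] ∙ w) ∘ u) ↔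
      ∃ g : F[X], g • w = ∑ j, f j • u j := by
  rw [mem_relations, ← Submodule.mem_span_singleton, ← Submodule.Quotient.mk_eq_zero,
    ← Submodule.mkQ_apply, map_sum]
  simp

theorem cons_mem_degreeLTPart_relations_iff {g : F[X]} {f : Fin m → F[X]} {d : ℕ} :
    (Fin.cons g f : Fin (m + 1) → F[X]) ∈
        degreeLTPart (relations F (Fin.cons w u : Fin (m + 1) → V)) d ↔
      g • w + ∑ j, f j • u j = 0 ∧ g ∈ degreeLT F d ∧ f ∈ piDegreeLT F fun _ => d := by
  rw [degreeLTPart, Submodule.mem_inf, Submodule.restrictScalars_mem, mem_relations,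
    Fin.sum_univ_succ, mem_piDegreeLT, mem_piDegreeLT, Fin.forall_fin_succ]
  simp

variable {p : F[X]} {k : Fin m → ℕ} {v : Matrix (Fin m) (Fin m) F[X]} {G : Fin m → F[X]}

theorem sum_vecMul_smul (hG : ∀ i, ∑ j, v i j • u j = G i • w) (h : Fin m → F[X]) :
    ∑ j, (h ᵥ* v) j • u j = (h ⬝ᵥ G) • w := by
  simp only [vecMul, dotProduct, Finset.sum_smul, mul_smul]
  rw [Finset.sum_comm]
  exact Finset.sum_congr rfl fun i _ => by rw [← Finset.smul_sum, hG]

variable (hp : p.Monic) (hw : ∀ g : F[X], g • w = 0 ↔ p ∣ g)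
include hp hw

theorem map_tail_degreeLTPart_relations_cons
    (hv : IsReducedBasis (relations F (Submodule.Quotient.mk (p := F[X] ∙ w) ∘ u)) k v)
    (hG : ∀ i, ∑ j, v i j • u j = G i • w) (d : ℕ) :
    (degreeLTPart (relations F (Fin.cons w u : Fin (m + 1) → V)) d).map
        (LinearMap.funLeft F F[X] Fin.succ) =
      (extensionSolutions p.natDegree k (fun i => tailSeq p (G i)) d).map
        (v.vecMulLinear.restrictScalars F) := by
  ext f
  simp only [Submodule.mem_map, mem_extensionSolutions_tailSeq_iff hp, ← hw, sub_smul]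
  constructor
  · rintro ⟨f, hf, rfl⟩
    rw [← Fin.cons_self_tail f, cons_mem_degreeLTPart_relations_iff] at hf
    obtain ⟨hsum, hf0, hftail⟩ := hf
    have hmem : Fin.tail f ∈ relations F (Submodule.Quotient.mk (p := F[X] ∙ w) ∘ u) :=
      mem_relations_mk_iff.2 ⟨-f 0, by rw [neg_smul, neg_eq_of_add_eq_zero_right hsum]⟩
    obtain ⟨h, hh, hhf⟩ := hv.exists_vecMul_eq ⟨hmem, hftail⟩
    refine ⟨h, ⟨hh, -f 0, neg_mem hf0, ?_⟩, hhf⟩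
    rw [neg_smul, sub_neg_eq_add, add_comm, ← sum_vecMul_smul hG, hhf, hsum]
  · rintro ⟨h, ⟨hh, g, hg, hgw⟩, rfl⟩
    refine ⟨Fin.cons (-g) (h ᵥ* v), cons_mem_degreeLTPart_relations_iff.2 ⟨?_, neg_mem hg,
      vecMul_mem_piDegreeLT hv.row_mem_piDegreeLT hh⟩, rfl⟩
    rw [sum_vecMul_smul hG, neg_smul, neg_add_eq_sub, hgw]

theorem degreeLTPart_relations_cons_inf_ker_tail (d : ℕ) :
    degreeLTPart (relations F (Fin.cons w u : Fin (m + 1) → V)) d ⊓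
        LinearMap.ker (LinearMap.funLeft F F[X] Fin.succ) =
      (degreeLT F (d - p.natDegree)).map
        (LinearMap.single F (fun _ : Fin (m + 1) => F[X]) 0 ∘ₗ LinearMap.mulLeft F p) := by
  ext f
  have hsingle (g : F[X]) : (Pi.single 0 g : Fin (m + 1) → F[X]) = Fin.cons g 0 := by
    ext i : 1
    cases i using Fin.cases <;> simp
  constructor
  · intro hf
    obtain ⟨hf, hker⟩ := Submodule.mem_inf.1 hf
    have htail : Fin.tail f = 0 := hker
    rw [← Fin.cons_self_tail f, cons_mem_degreeLTPart_relations_iff, htail] at hf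
    obtain ⟨g, hg⟩ := (hw (f 0)).1 (by simpa using hf.1)
    refine ⟨g, (mul_mem_degreeLT_iff hp).1 (hg ▸ hf.2.1), ?_⟩
    rw [← Fin.cons_self_tail f, htail, hg, ← hsingle]
    rfl
  · rintro ⟨g, hg, rfl⟩
    refine Submodule.mem_inf.2 ⟨?_, funext fun i => by simp⟩
    change (Pi.single 0 (p * g) : Fin (m + 1) → F[X]) ∈ _
    rw [hsingle, cons_mem_degreeLTPart_relations_iff, (hw _).2 (dvd_mul_right p g)]
    exact ⟨by simp, (mul_mem_degreeLT_iff hp).2 hg, zero_mem _⟩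

theorem relationRank_cons
    (hv : IsReducedBasis (relations F (Submodule.Quotient.mk (p := F[X] ∙ w) ∘ u)) k v)
    (hG : ∀ i, ∑ j, v i j • u j = G i • w) (d : ℕ) :
    relationRank F (Fin.cons w u : Fin (m + 1) → V) d =
      Module.finrank F (extensionSolutions p.natDegree k (fun i => tailSeq p (G i)) d) +
        (d - p.natDegree) := by
  have hinj : Function.Injective
      (LinearMap.single F (fun _ : Fin (m + 1) => F[X]) 0 ∘ₗ LinearMap.mulLeft F p) :=
    (Pi.single_injective 0).comp (mul_right_injective₀ hp.ne_zero)
  rw [relationRank, ← finrank_map_add_finrank_inf_ker_s6 _ (LinearMap.funLeft F F[X] Fin.succ),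
    map_tail_degreeLTPart_relations_cons hp hw hv hG,
    degreeLTPart_relations_cons_inf_ker_tail hp hw]
  congr 1
  · exact (Submodule.equivMapOfInjective (v.vecMulLinear.restrictScalars F) hv.vecMul_injective
      _).finrank_eq.symm
  · rw [← (Submodule.equivMapOfInjective _ hinj _).finrank_eq, finrank_degreeLT]

end Cons

end Relations

section Lifts

open Polynomial Matrix

variable {F V : Type*} [Field F] [AddCommGroup V] [Module F[X] V]

theorem exists_monic_forall_mem_iff_dvd {I : Ideal F[X]} (hI : I ≠ ⊥) :
    ∃ p : F[X], p.Monic ∧ ∀ g, g ∈ I ↔ p ∣ g := by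
  obtain ⟨a, rfl⟩ := (inferInstance : I.IsPrincipal)
  rw [Ne, Submodule.span_singleton_eq_bot] at hI
  refine ⟨a * C a.leadingCoeff⁻¹, monic_mul_leadingCoeff_inv hI, fun g => ?_⟩
  rw [Ideal.submodule_span_eq, Ideal.mem_span_singleton]
  have hu : IsUnit (C a.leadingCoeff⁻¹) :=
    isUnit_C.2 (IsUnit.mk0 _ (inv_ne_zero (leadingCoeff_ne_zero.2 hI)))
  exact hu.mul_right_dvd.symm

variable (F V) in
theorem annihilator_ne_bot [Finite V] : Module.annihilator F[X] V ≠ ⊥ := by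
  have : Finite (AddMonoid.End V) := DFunLike.finite (AddMonoid.End V)
  intro h
  rw [Module.annihilator, ← RingHom.injective_iff_ker_eq_bot] at h
  exact not_injective_infinite_finite _ h

variable (F) in
theorem exists_monic_forall_smul_eq_zero [Finite V] :
    ∃ p : F[X], p.Monic ∧ ∀ x : V, p • x = 0 := by
  obtain ⟨p, hp, hpI⟩ := exists_monic_forall_mem_iff_dvd (annihilator_ne_bot F V)
  exact ⟨p, hp, Module.mem_annihilator.1 ((hpI p).2 dvd_rfl)⟩

variable (F) in
theorem exists_monic_smul_eq_zero_iff [Finite V] (w : V) :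
    ∃ p : F[X], p.Monic ∧ ∀ g : F[X], g • w = 0 ↔ p ∣ g :=
  exists_monic_forall_mem_iff_dvd (I := Ideal.torsionOf F[X] V w) <|
    ne_bot_of_le_ne_bot (annihilator_ne_bot F V) fun _ hg => Module.mem_annihilator.1 hg w

theorem natCard_span_singleton {p : F[X]} (hp : p.Monic) {w : V}
    (hw : ∀ g : F[X], g • w = 0 ↔ p ∣ g) :
    Nat.card (F[X] ∙ w) = Nat.card F ^ p.natDegree := by
  have htors : Ideal.torsionOf F[X] V w = Ideal.span {p} :=
    Ideal.ext fun g => (hw g).trans Ideal.mem_span_singleton.symm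
  have := hp.finite_quotient
  rw [← Nat.card_congr (Ideal.quotTorsionOfEquivSpanSingleton F[X] V w).toEquiv, htors,
    Module.natCard_eq_pow_finrank (K := F), finrank_quotient_span_eq_natDegree]

theorem exists_isReducedBasis_relations [Finite V] {ι : Type*} [Fintype ι] [DecidableEq ι]
    (w : ι → V) : ∃ k v, IsReducedBasis (relations F w) k v := by
  obtain ⟨p, hp, hpV⟩ := exists_monic_forall_smul_eq_zero F (V := V)
  refine exists_isReducedBasis hp fun i => mem_relations.2 ?_
  simp [Pi.single_apply, hpV]

variable {m : ℕ}

/-- The lifts to `V` of a tuple of vectors of the quotient of `V` by the cyclic submodule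
generated by `w`. -/
def quotientLifts (w : V) (wb : Fin m → V ⧸ (F[X] ∙ w)) : Set (Fin m → V) :=
  {u | Submodule.Quotient.mk ∘ u = wb}

variable {w : V} {wb : Fin m → V ⧸ (F[X] ∙ w)} {p : F[X]}

theorem add_smul_mem_quotientLifts {u₀ : Fin m → V} (hu₀ : u₀ ∈ quotientLifts w wb)
    (g : Fin m → F[X]) : (fun j => u₀ j + g j • w) ∈ quotientLifts w wb := by
  rw [← show _ = wb from hu₀]
  refine funext fun j => (Submodule.Quotient.eq _).2 ?_
  rw [add_sub_cancel_left]
  exact Submodule.mem_span_singleton.2 ⟨g j, rfl⟩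

theorem bijective_add_smul_quotientLifts (hp : p.Monic) (hw : ∀ g : F[X], g • w = 0 ↔ p ∣ g)
    {u₀ : Fin m → V} (hu₀ : u₀ ∈ quotientLifts w wb) :
    Function.Bijective fun g : Fin m → degreeLT F p.natDegree =>
      (⟨fun j => u₀ j + (g j : F[X]) • w, add_smul_mem_quotientLifts hu₀ fun j => g j⟩ :
        quotientLifts w wb) := by
  constructor
  · refine fun g g' hgg' => funext fun j => Subtype.ext ?_
    have hj := congrFun (congrArg Subtype.val hgg') j
    rw [add_right_inj, ← sub_eq_zero, ← sub_smul, hw, ← modByMonic_eq_zero_iff_dvd hp] at hj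
    rw [← sub_eq_zero, ← hj]
    exact (modByMonic_eq_self_of_mem_degreeLT hp (sub_mem (g j).2 (g' j).2)).symm
  · rintro ⟨u, hu⟩
    have hmem (j : Fin m) : u j - u₀ j ∈ F[X] ∙ w :=
      (Submodule.Quotient.eq _).1 (congrFun ((show _ = wb from hu).trans hu₀.symm) j)
    choose g hg using fun j => Submodule.mem_span_singleton.1 (hmem j)
    refine ⟨fun j => ⟨g j %ₘ p, modByMonic_mem_degreeLT hp _⟩, Subtype.ext (funext fun j => ?_)⟩
    have hmod := (hw _).2 (dvd_sub_modByMonic p (g j))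
    rw [sub_smul, sub_eq_zero] at hmod
    change u₀ j + (g j %ₘ p) • w = u j
    rw [← hmod, hg, add_sub_cancel]

variable {k : Fin m → ℕ} {v : Matrix (Fin m) (Fin m) F[X]}

/-- The initial segments, of lengths `p.natDegree - k i`, of the principal parts of the entries of
`v *ᵥ g` divided by `p`. They are the part of `tailSeq` that `extensionSolutions` depends on. -/
noncomputable def truncTail (p : F[X]) (k : Fin m → ℕ) (v : Matrix (Fin m) (Fin m) F[X]) :
    (Fin m → degreeLT F p.natDegree) →+ ∀ i, Fin (p.natDegree - k i) → F where
  toFun g i j := tailSeq p ((v *ᵥ fun l => (g l : F[X])) i) j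
  map_zero' := by
    ext i j
    simp [mulVec, dotProduct]
  map_add' g g' := by
    ext i j
    simp [mulVec, dotProduct, mul_add, Finset.sum_add_distrib]

theorem truncTail_surjective (hp : p.Monic) (hv : IsRowReduced k v) :
    Function.Surjective (truncTail p k v) := by
  intro b
  choose y hy using fun i => exists_tailSeq_eq hp (Function.extend Fin.val (b i) 0)
  obtain ⟨t, ht⟩ := hv.exists_sub_mulVec_mem_piDegreeLT y
  refine ⟨fun l => ⟨t l %ₘ p, modByMonic_mem_degreeLT hp _⟩, funext₂ fun i j => ?_⟩
  have hdvd : p ∣ (v *ᵥ t) i - (v *ᵥ fun l => t l %ₘ p) i := by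
    rw [← Pi.sub_apply, ← mulVec_sub]
    change p ∣ ∑ l, v i l * (t l - t l %ₘ p)
    exact Finset.dvd_sum fun l _ => (dvd_sub_modByMonic p (t l)).mul_left _
  have hzero : tailSeq p (y i - (v *ᵥ t) i) j = 0 :=
    (exists_mem_degreeLT_dvd_sub_iff hp).1
      ⟨_, mem_piDegreeLT.1 ht i, by simp⟩ j (by omega)
  rw [map_sub, Pi.sub_apply, sub_eq_zero, hy i j (by omega), Fin.val_injective.extend_apply]
    at hzero
  change tailSeq p ((v *ᵥ fun l => t l %ₘ p) i) j = b i j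
  rw [← tailSeq_eq_of_dvd_sub hp hdvd, hzero]

/-- The relation rank of a tuple `Fin.cons w u`, when `c` is the degree of the annihilator of `w`,
`k` are the row degrees of the relations of `u` modulo `w` and `θ` is the principal part data of
the extension. -/
noncomputable def extensionRank (c : ℕ) (k : Fin m → ℕ) (θ : ∀ i, Fin (c - k i) → F) (d : ℕ) : ℕ :=
  Module.finrank F (extensionSolutions c k (fun i => Function.extend Fin.val (θ i) 0) d) + (d - c)

-- The data of an extension of the relations of `wb` is uniformly distributed over the lifts.
theorem exists_equiv_quotientLifts_relationRank_cons (hp : p.Monic)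
    (hw : ∀ g : F[X], g • w = 0 ↔ p ∣ g) (hv : IsReducedBasis (relations F wb) k v) {c : ℕ}
    (hc : p.natDegree = c) :
    ∃ (θ₀ : ∀ i, Fin (c - k i) → F)
      (φ : (Fin m → degreeLT F c) →+ ∀ i, Fin (c - k i) → F)
      (E : (Fin m → degreeLT F c) ≃ quotientLifts w wb),
      Function.Surjective φ ∧ ∀ g,
        relationRank F (Fin.cons w (E g).1 : Fin (m + 1) → V) = extensionRank c k (θ₀ + φ g) := by
  subst hc
  choose u₀ hu₀ using fun j => Submodule.Quotient.mk_surjective _ (wb j)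
  obtain rfl : Submodule.Quotient.mk ∘ u₀ = wb := funext hu₀
  have hlift : u₀ ∈ quotientLifts w (Submodule.Quotient.mk (p := F[X] ∙ w) ∘ u₀) := rfl
  choose G₀ hG₀ using fun i => mem_relations_mk_iff.1 (hv.row_mem i)
  refine ⟨fun i j => tailSeq p (G₀ i) j, truncTail p k v,
    Equiv.ofBijective _ (bijective_add_smul_quotientLifts hp hw hlift),
    truncTail_surjective hp hv.toIsRowReduced, fun g => funext fun d => ?_⟩
  have hu := add_smul_mem_quotientLifts hlift fun j => (g j : F[X])
  have hG (i : Fin m) : ∑ j, v i j • (u₀ j + (g j : F[X]) • w) =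
      (G₀ i + (v *ᵥ fun j => (g j : F[X])) i) • w := by
    rw [add_smul, hG₀, mulVec, dotProduct, Finset.sum_smul, ← Finset.sum_add_distrib]
    exact Finset.sum_congr rfl fun j _ => by rw [smul_add, mul_smul]
  rw [Equiv.ofBijective_apply, relationRank_cons hp hw ((show _ = _ from hu) ▸ hv) hG]
  refine congrArg (fun S : ℕ → Submodule F (Fin m → F[X]) => Module.finrank F (S d) + _)
    (extensionSolutions_congr fun i j hj => ?_)
  rw [map_add, show j = (⟨j, hj⟩ : Fin (p.natDegree - k i)).val from rfl,
    Fin.val_injective.extend_apply]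
  rfl

theorem exists_equiv_quotientLifts_relationRank_eq [Finite F] [Finite V] {V' : Type*}
    [AddCommGroup V'] [Module F[X] V'] [Finite V'] {w' : V'} {wb' : Fin m → V' ⧸ (F[X] ∙ w')}
    (hcard : Nat.card (F[X] ∙ w) = Nat.card (F[X] ∙ w'))
    (hrank : relationRank F wb = relationRank F wb') :
    ∃ E : quotientLifts w wb ≃ quotientLifts w' wb', ∀ u,
      relationRank F (Fin.cons w' (E u).1 : Fin (m + 1) → V') =
        relationRank F (Fin.cons w u.1 : Fin (m + 1) → V) := by
  obtain ⟨p, hp, hw⟩ := exists_monic_smul_eq_zero_iff F w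
  obtain ⟨p', hp', hw'⟩ := exists_monic_smul_eq_zero_iff F w'
  rw [natCard_span_singleton hp hw, natCard_span_singleton hp' hw'] at hcard
  have hdeg : p'.natDegree = p.natDegree :=
    (Nat.pow_right_injective Finite.one_lt_card hcard).symm
  have : Finite (V ⧸ F[X] ∙ w) := Quotient.finite _
  have : Finite (V' ⧸ F[X] ∙ w') := Quotient.finite _
  obtain ⟨k, v, hv⟩ := exists_isReducedBasis_relations (F := F) wb
  obtain ⟨k', v', hv'⟩ := exists_isReducedBasis_relations (F := F) wb'
  obtain ⟨e, he⟩ := exists_equiv_of_sum_tsub_eq (k := k) (k' := k') fun d => by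
    rw [← hv.finrank_degreeLTPart, ← hv'.finrank_degreeLTPart]
    exact congrFun hrank d
  obtain rfl : k' ∘ e = k := funext he
  obtain ⟨θ, φ, E, hφ, hE⟩ := exists_equiv_quotientLifts_relationRank_cons hp hw hv rfl
  obtain ⟨θ', φ', E', hφ', hE'⟩ :=
    exists_equiv_quotientLifts_relationRank_cons hp' hw' (hv'.submatrix e) hdeg
  have : Finite (degreeLT F p.natDegree) := .of_equiv _ (degreeLTEquiv F _).symm.toEquiv
  obtain ⟨ε, hε⟩ := exists_equiv_add_eq_add_of_surjective hφ hφ' θ θ'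
  refine ⟨E.symm.trans (ε.trans E'), fun u => ?_⟩
  obtain ⟨g, rfl⟩ := E.surjective u
  rw [Equiv.trans_apply, Equiv.symm_apply_apply, Equiv.trans_apply, hE, hE']
  exact congrArg _ (hε g)

end Lifts

section PreservesCyclic

open Polynomial

theorem mk_mem_span_singleton_mk_iff {R V : Type*} [Ring R] [AddCommGroup V] [Module R V]
    {W : Submodule R V} {x y : V} :
    (Submodule.Quotient.mk x : V ⧸ W) ∈ R ∙ (Submodule.Quotient.mk y : V ⧸ W) ↔
      ∃ z ∈ R ∙ y, x - z ∈ W := by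
  simp only [Submodule.mem_span_singleton, exists_exists_eq_and, ← Submodule.Quotient.mk_smul,
    ← Submodule.Quotient.eq]
  exact exists_congr fun a => eq_comm

/-- An additive isomorphism that maps each cyclic submodule onto the cyclic submodule generated by
the image of the generator. -/
def PreservesCyclic (R R' : Type*) {V V' : Type*} [Semiring R] [AddCommGroup V] [Module R V]
    [Semiring R'] [AddCommGroup V'] [Module R' V'] (e : V ≃+ V') : Prop :=
  ∀ x y, e x ∈ R' ∙ e y ↔ x ∈ R ∙ y

namespace PreservesCyclic

variable {R R' V V' : Type*} [AddCommGroup V] [AddCommGroup V']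

-- Both `e` and `ε` act injectively on the pairs `(x, y)` with `x ∈ R ∙ y`, so by finiteness `e`
-- maps onto all such pairs.
theorem of_forall_mem [Semiring R] [Module R V] [Semiring R'] [Module R' V'] [Finite V]
    [Finite V'] {e : V ≃+ V'} (he : ∀ x y, x ∈ R ∙ y → e x ∈ R' ∙ e y) {ε : V' ≃+ V}
    (hε : ∀ x y, x ∈ R' ∙ y → ε x ∈ R ∙ ε y) : PreservesCyclic R R' e := by
  let S : Set (V × V) := {z | z.1 ∈ R ∙ z.2}
  let S' : Set (V' × V') := {z | z.1 ∈ R' ∙ z.2}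
  have hS : Prod.map e e '' S ⊆ S' := Set.image_subset_iff.2 fun z hz => he _ _ hz
  have hS' : Prod.map ε ε '' S' ⊆ S := Set.image_subset_iff.2 fun z hz => hε _ _ hz
  have heinj : Function.Injective (Prod.map e e) := e.injective.prodMap e.injective
  have hcard : S'.ncard ≤ (Prod.map e e '' S).ncard := by
    rw [Set.ncard_image_of_injective _ heinj,
      ← Set.ncard_image_of_injective S' (ε.injective.prodMap ε.injective)]
    exact Set.ncard_le_ncard hS'
  have heq := Set.eq_of_subset_of_ncard_le hS hcard
  refine fun x y => ⟨fun hxy => ?_, he x y⟩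
  have hmem : Prod.map e e (x, y) ∈ Prod.map e e '' S := heq ▸ hxy
  exact (heinj.mem_set_image).1 hmem

theorem exists_quotient [Ring R] [Module R V] [Ring R'] [Module R' V'] {e : V ≃+ V'}
    (he : PreservesCyclic R R' e) (w : V) :
    ∃ e' : V ⧸ (R ∙ w) ≃+ V' ⧸ (R' ∙ e w), PreservesCyclic R R' e' := by
  have hmap : (R ∙ w).toAddSubgroup.map e.toAddMonoidHom = (R' ∙ e w).toAddSubgroup := by
    ext x
    obtain ⟨x, rfl⟩ := e.surjective x
    exact (e.injective.mem_set_image).trans (he x w).symm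
  refine ⟨QuotientAddGroup.congr _ _ e hmap, fun x y => ?_⟩
  obtain ⟨x, rfl⟩ := Submodule.Quotient.mk_surjective _ x
  obtain ⟨y, rfl⟩ := Submodule.Quotient.mk_surjective _ y
  change Submodule.Quotient.mk (e x) ∈ R' ∙ Submodule.Quotient.mk (e y) ↔ _
  simp_rw [mk_mem_span_singleton_mk_iff, e.surjective.exists, ← map_sub, he _ _]

variable {F : Type*} [Field F] [Finite F]

theorem exists_equiv_relationRank_eq (m : ℕ) {V V' : Type*} [AddCommGroup V] [Module F[X] V]
    [Finite V] [AddCommGroup V'] [Module F[X] V'] [Finite V'] {e : V ≃+ V'}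
    (he : PreservesCyclic F[X] F[X] e) :
    ∃ E : (Fin m → V) ≃ (Fin m → V'), ∀ w, relationRank F (E w) = relationRank F w := by
  induction m generalizing V V' with
  | zero =>
    exact ⟨.ofUnique _ _, fun w => funext fun d =>
      congrArg (fun K => Module.finrank F (degreeLTPart K d))
        (Subsingleton.elim (relations F _) (relations F w))⟩
  | succ m ih =>
    have hfix (w : V) : ∃ E : (Fin m → V) ≃ (Fin m → V'), ∀ u,
        relationRank F (Fin.cons (e w) (E u) : Fin (m + 1) → V') =
          relationRank F (Fin.cons w u : Fin (m + 1) → V) := by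
      have := Quotient.finite (F[X] ∙ w).quotientRel
      have := Quotient.finite (F[X] ∙ e w).quotientRel
      have hcard : Nat.card (F[X] ∙ w) = Nat.card (F[X] ∙ e w) :=
        Nat.card_congr (e.toEquiv.subtypeEquiv fun x => (he x w).symm)
      obtain ⟨e', he'⟩ := he.exists_quotient w
      obtain ⟨Eb, hEb⟩ := ih he'
      exact exists_equiv_of_equiv_fiber (Submodule.Quotient.mk ∘ ·)
        (Submodule.Quotient.mk ∘ ·) Eb
        (r := fun u => relationRank F (Fin.cons w u : Fin (m + 1) → V))
        (r' := fun u => relationRank F (Fin.cons (e w) u : Fin (m + 1) → V')) fun wb =>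
        exists_equiv_quotientLifts_relationRank_eq hcard (hEb wb).symm
    choose E hE using hfix
    refine ⟨(Fin.consEquiv fun _ => V).symm.trans ((Equiv.prodShear e.toEquiv E).trans
      (Fin.consEquiv fun _ => V')), fun w => ?_⟩
    have h := hE (w 0) (Fin.tail w)
    rwa [Fin.cons_self_tail] at h

end PreservesCyclic

end PreservesCyclic

section SplittingSubspaces

open Polynomial

theorem relationRank_eq_zero_iff {F V ι : Type*} [Field F] [AddCommGroup V] [Module F[X] V]
    [Module F V] [IsScalarTower F F[X] V] [Fintype ι] {w : ι → V} {d : ℕ} :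
    relationRank F w d = 0 ↔
      LinearIndependent F fun x : Fin d × ι => (X ^ (x.1 : ℕ) : F[X]) • w x.2 := by
  have hsum (g : Fin d × ι → F) : ∑ x, g x • (X ^ (x.1 : ℕ) : F[X]) • w x.2 =
      ∑ i, ((degreeLTEquiv F d).symm fun j => g (j, i) : F[X]) • w i := by
    rw [Fintype.sum_prod_type_right]
    refine Finset.sum_congr rfl fun i _ => ?_
    change _ = (∑ j : Fin d, monomial (j : ℕ) (g (j, i))) • w i
    simp_rw [Finset.sum_smul, ← smul_X_eq_monomial, smul_assoc]
  rw [relationRank, Submodule.finrank_eq_zero, Submodule.eq_bot_iff,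
    Fintype.linearIndependent_iff]
  refine ⟨fun h g hg x => ?_, fun h f hf => ?_⟩
  · have h0 := h (fun i => (degreeLTEquiv F d).symm fun j => g (j, i))
      ⟨mem_relations.2 ((hsum g).symm.trans hg), mem_piDegreeLT.2 fun i => Subtype.prop _⟩
    refine (congrFun ((degreeLTEquiv F d).apply_symm_apply fun j => g (j, x.2)) x.1).symm.trans ?_
    exact (congrArg (coeff · x.1) (congrFun h0 x.2)).trans (coeff_zero _)
  · have hfd := mem_piDegreeLT.1 hf.2
    have hsymm (i : ι) :
        ((degreeLTEquiv F d).symm (degreeLTEquiv F d ⟨f i, hfd i⟩) : F[X]) = f i := by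
      rw [LinearEquiv.symm_apply_apply]
    have hf0 := h (fun x => degreeLTEquiv F d ⟨f x.2, hfd x.2⟩ x.1) <|
      (hsum _).trans <| (Finset.sum_congr rfl fun i _ => congrArg (· • w i) (hsymm i)).trans <|
        mem_relations.1 (Submodule.mem_inf.1 hf).1
    refine funext fun i => congrArg Subtype.val <|
      (degreeLTEquiv F d).injective (a₁ := ⟨f i, hfd i⟩) (a₂ := 0) ?_
    rw [map_zero]
    exact funext fun j => hf0 (j, i)

variable {F V : Type*} [Field F] [AddCommGroup V] [Module F V]

theorem relationRank_aeval_eq_zero_iff {T : V →ₗ[F] V} {ι : Type*} [Fintype ι] {w : ι → V}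
    {d : ℕ} :
    relationRank F (Module.AEval'.of T ∘ w) d = 0 ↔
      LinearIndependent F fun x : Fin d × ι => (T ^ (x.1 : ℕ)) (w x.2) := by
  simp_rw [relationRank_eq_zero_iff, Function.comp_apply, Module.AEval'.X_pow_smul_of]
  exact (Module.AEval'.of T).toLinearMap.linearIndependent_iff (LinearEquiv.ker _)

theorem iSupIndep_span_range_of_linearIndependent {ι κ : Type*} {v : ι × κ → V}
    (hv : LinearIndependent F v) :
    iSupIndep fun i => Submodule.span F (Set.range fun a => v (i, a)) := by
  intro i
  refine (hv.disjoint_span_image (s := {x | x.1 = i}) (t := {x | x.1 ≠ i})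
    (Set.disjoint_left.2 fun x hx hx' => hx' hx)).mono (Submodule.span_mono ?_)
    (iSup₂_le fun j hj => Submodule.span_mono ?_)
  · rintro _ ⟨a, rfl⟩
    exact ⟨(i, a), rfl, rfl⟩
  · rintro _ ⟨a, rfl⟩
    exact ⟨(j, a), hj, rfl⟩

theorem linearIndependent_pow_apply_iff [FiniteDimensional F V] {T : V →ₗ[F] V} {m d : ℕ}
    (hd : 0 < d) (hdim : Module.finrank F V = m * d) {w : Fin m → V} :
    (LinearIndependent F fun x : Fin d × Fin m => (T ^ (x.1 : ℕ)) (w x.2)) ↔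
      LinearIndependent F w ∧ IsSplittingSubspace T m d (Submodule.span F (Set.range w)) := by
  have hcard : Fintype.card (Fin d × Fin m) = Module.finrank F V := by simp [hdim, mul_comm]
  have hmap (i : Fin d) : (Submodule.span F (Set.range w)).map (T ^ (i : ℕ)) =
      Submodule.span F (Set.range fun a => (T ^ (i : ℕ)) (w a)) := by
    rw [Submodule.map_span, ← Set.range_comp, Function.comp_def]
  have hsup : ⨆ i : Fin d, Submodule.span F (Set.range fun a => (T ^ (i : ℕ)) (w a)) =
      Submodule.span F (Set.range fun x : Fin d × Fin m => (T ^ (x.1 : ℕ)) (w x.2)) := by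
    rw [← Submodule.span_iUnion]
    congr 1
    ext y
    simp
  simp_rw [IsSplittingSubspace, hmap, hsup]
  refine ⟨fun h => ?_,
    fun h => linearIndependent_of_top_le_span_of_card_eq_finrank h.2.2.2.ge hcard⟩
  have hw : LinearIndependent F w := by
    simpa [Function.comp_def] using h.comp ((⟨0, hd⟩ : Fin d), ·) (Prod.mk_right_injective _)
  have hrank : Module.finrank F (Submodule.span F (Set.range w)) = m := by
    rw [finrank_span_eq_card hw, Fintype.card_fin]
  have hindep := iSupIndep_span_range_of_linearIndependent h
  have htop := h.span_eq_top_of_card_eq_finrank' hcard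
  exact ⟨hw, hrank, hindep, htop⟩

theorem natCard_linearIndependent_span_mem [Finite F] [Finite V] {m : ℕ} {S : Set (Submodule F V)}
    (hS : ∀ W ∈ S, Module.finrank F W = m) :
    Nat.card {w : Fin m → V // LinearIndependent F w ∧ Submodule.span F (Set.range w) ∈ S} =
      S.ncard * ∏ i : Fin m, (Nat.card F ^ m - Nat.card F ^ (i : ℕ)) := by
  have := Fintype.ofFinite F
  have hli {W : S} {s : Fin m → W.1} :
      LinearIndependent F (Subtype.val ∘ s) ↔ LinearIndependent F s :=
    W.1.subtype.linearIndependent_iff W.1.ker_subtype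
  have hspan {W : S} {s : Fin m → W.1} (hs : LinearIndependent F s) :
      Submodule.span F (Set.range (Subtype.val ∘ s)) = W.1 := by
    rw [Set.range_comp, ← Submodule.coe_subtype, Submodule.span_image,
      hs.span_eq_top_of_card_eq_finrank' (by simp [hS _ W.2]), Submodule.map_top,
      Submodule.range_subtype]
  let f (x : Σ W : S, {s : Fin m → W.1 // LinearIndependent F s}) :
      {w : Fin m → V // LinearIndependent F w ∧ Submodule.span F (Set.range w) ∈ S} :=
    ⟨Subtype.val ∘ x.2.1, hli.2 x.2.2, (hspan x.2.2).symm ▸ x.1.2⟩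
  have hf : Function.Bijective f := by
    constructor
    · rintro ⟨W, s, hs⟩ ⟨W', s', hs'⟩ h
      have hval : Subtype.val ∘ s = Subtype.val ∘ s' := congrArg Subtype.val h
      obtain rfl : W = W' := Subtype.ext (by rw [← hspan hs, hval, hspan hs'])
      obtain rfl : s = s' := Subtype.val_injective.comp_left hval
      rfl
    · exact fun ⟨w, hw, hwS⟩ => ⟨⟨⟨_, hwS⟩, _, linearIndependent_span hw⟩, rfl⟩
  have := Fintype.ofFinite S
  rw [← Nat.card_congr (Equiv.ofBijective f hf), Nat.card_sigma]
  simp_rw [Nat.card_eq_fintype_card (α := F)]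
  rw [Finset.sum_congr rfl fun W _ => (hS _ W.2 ▸ card_linearIndependent le_rfl),
    Finset.sum_const, smul_eq_mul, Finset.card_univ, ← Nat.card_eq_fintype_card,
    Nat.card_coe_set_eq]

theorem natCard_relationRank_eq_zero [Finite F] [FiniteDimensional F V] {T : V →ₗ[F] V} {m d : ℕ}
    (hd : 0 < d) (hdim : Module.finrank F V = m * d) :
    Nat.card {w : Fin m → Module.AEval' T // relationRank F w d = 0} =
      splitCount T m d * ∏ i : Fin m, (Nat.card F ^ m - Nat.card F ^ (i : ℕ)) := by
  have : Finite V := Module.finite_of_finite F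
  rw [splitCount, ← natCard_linearIndependent_span_mem fun W hW => hW.1]
  refine Nat.card_congr (((Equiv.refl _).arrowCongr (Module.AEval'.of T).toEquiv).subtypeEquiv
    fun w => ?_).symm
  exact ((linearIndependent_pow_apply_iff hd hdim).symm.trans
    relationRank_aeval_eq_zero_iff.symm)

theorem splitCount_eq_of_preservesCyclic [Finite F] [FiniteDimensional F V] {V' : Type*}
    [AddCommGroup V'] [Module F V'] [FiniteDimensional F V'] {T : V →ₗ[F] V} {T' : V' →ₗ[F] V'}
    {m d : ℕ} (hd : 0 < d) (hdim : Module.finrank F V = m * d)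
    (hdim' : Module.finrank F V' = m * d) {e : Module.AEval' T ≃+ Module.AEval' T'}
    (he : PreservesCyclic F[X] F[X] e) : splitCount T m d = splitCount T' m d := by
  have : Finite (Module.AEval' T) := Module.finite_of_finite F
  have : Finite (Module.AEval' T') := Module.finite_of_finite F
  obtain ⟨E, hE⟩ := he.exists_equiv_relationRank_eq m
  have hpos : 0 < ∏ i : Fin m, (Nat.card F ^ m - Nat.card F ^ (i : ℕ)) :=
    Finset.prod_pos fun i _ =>
      Nat.sub_pos_of_lt (Nat.pow_lt_pow_right Finite.one_lt_card i.2)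
  refine Nat.eq_of_mul_eq_mul_right hpos ?_
  rw [← natCard_relationRank_eq_zero hd hdim, ← natCard_relationRank_eq_zero hd hdim']
  exact Nat.card_congr (E.subtypeEquiv fun w => by rw [hE])

end SplittingSubspaces

section ElementaryDivisors

open Polynomial Submodule

universe u

theorem finrank_torsionBy_quotient {F R : Type*} [Field F] [CommRing R] [Algebra F R]
    (I : Ideal R) [FiniteDimensional F (R ⧸ I)] (b : R) :
    Module.finrank F (torsionBy R (R ⧸ I) b) = Module.finrank F (R ⧸ I ⊔ Ideal.span {b}) := by
  let f : (R ⧸ I) →ₗ[R] R ⧸ I := LinearMap.lsmul R (R ⧸ I) b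
  have hrange : LinearMap.range f = Submodule.map I.mkQ (Ideal.span {b}) := by
    rw [Ideal.span, Submodule.map_span, Set.image_singleton]
    ext x
    rw [mem_span_singleton]
    constructor
    · rintro ⟨y, rfl⟩
      obtain ⟨r, rfl⟩ := I.mkQ_surjective y
      refine ⟨r, ?_⟩
      rw [← map_smul, smul_eq_mul, mul_comm, ← smul_eq_mul, map_smul, LinearMap.lsmul_apply]
    · rintro ⟨r, rfl⟩
      refine ⟨I.mkQ r, ?_⟩
      rw [LinearMap.lsmul_apply, ← map_smul, ← map_smul, smul_eq_mul, smul_eq_mul, mul_comm]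
  have hcoker : Module.finrank F ((R ⧸ I) ⧸ LinearMap.range f) =
      Module.finrank F (R ⧸ I ⊔ Ideal.span {b}) :=
    (((Submodule.quotEquivOfEq _ _ hrange).trans
      (quotientQuotientEquivQuotientSup I (Ideal.span {b}))).restrictScalars F).finrank_eq
  have hker := (f.restrictScalars F).finrank_range_add_finrank_ker
  have hquot := ((LinearMap.range f).restrictScalars F).finrank_quotient_add_finrank
  rw [← hcoker, ← (Submodule.Quotient.restrictScalarsEquiv F (LinearMap.range f)).finrank_eq]
  have hker' : Module.finrank F (torsionBy R (R ⧸ I) b) =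
    Module.finrank F (LinearMap.ker (f.restrictScalars F)) := rfl
  have hrange' : Module.finrank F (LinearMap.range (f.restrictScalars F)) =
    Module.finrank F ((LinearMap.range f).restrictScalars F) := rfl
  omega

section Field

variable {F : Type*} [Field F]

theorem isCoprime_of_monic_of_irreducible_of_ne {p q : F[X]} (hp : p.Monic) (hpi : Irreducible p)
    (hq : q.Monic) (hqi : Irreducible q) (hpq : p ≠ q) : IsCoprime p q :=
  hpi.coprime_iff_not_dvd.2 fun h =>
    hpq (eq_of_monic_of_associated hp hq (hpi.associated_of_dvd hqi h))

theorem finrank_torsionBy_quotient_pow {p q : F[X]} (hp : p.Monic) (hpi : Irreducible p)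
    (hq : q.Monic) (hqi : Irreducible q) (e j : ℕ) [Decidable (p = q)] :
    Module.finrank F (torsionBy F[X] (F[X] ⧸ Ideal.span {p ^ e}) (q ^ j)) =
      if p = q then q.natDegree * min e j else 0 := by
  have : FiniteDimensional F (F[X] ⧸ Ideal.span {p ^ e}) := (hp.pow e).finite_quotient
  rw [finrank_torsionBy_quotient]
  split_ifs with hpq
  · subst hpq
    have hsup : Ideal.span {p ^ e} ⊔ Ideal.span {p ^ j} = Ideal.span {p ^ min e j} := by
      rcases le_total e j with h | h
      · rw [min_eq_left h, sup_eq_left, Ideal.span_singleton_le_span_singleton]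
        exact pow_dvd_pow p h
      · rw [min_eq_right h, sup_eq_right, Ideal.span_singleton_le_span_singleton]
        exact pow_dvd_pow p h
    rw [hsup, finrank_quotient_span_eq_natDegree, natDegree_pow, mul_comm]
  · have hsup : Ideal.span {p ^ e} ⊔ Ideal.span {q ^ j} = ⊤ :=
      (Ideal.isCoprime_span_singleton_iff _ _).2
        (isCoprime_of_monic_of_irreducible_of_ne hp hpi hq hqi hpq).pow |>.sup_eq
    rw [hsup]
    exact Module.finrank_zero_of_subsingleton

theorem finrank_torsionBy_congr {R M N : Type*} [CommRing R] [Algebra F R] [AddCommGroup M]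
    [Module R M] [Module F M] [IsScalarTower F R M] [AddCommGroup N] [Module R N] [Module F N]
    [IsScalarTower F R N] (L : M ≃ₗ[R] N) (a : R) :
    Module.finrank F (torsionBy R M a) = Module.finrank F (torsionBy R N a) := by
  have hcomap : (torsionBy R N a).comap (L : M →ₗ[R] N) = torsionBy R M a := by
    ext x
    simp [mem_torsionBy_iff, ← map_smul]
  exact (((LinearEquiv.ofEq _ _ hcomap.symm).trans
    (L.ofSubmodule' (torsionBy R N a))).restrictScalars F).finrank_eq

theorem finrank_torsionBy_pi {R ι : Type*} [CommRing R] [Algebra F R] [Fintype ι] {M : ι → Type*}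
    [∀ i, AddCommGroup (M i)] [∀ i, Module R (M i)] [∀ i, Module F (M i)]
    [∀ i, IsScalarTower F R (M i)] [∀ i, FiniteDimensional F (M i)] (a : R) :
    Module.finrank F (torsionBy R (∀ i, M i) a) =
      ∑ i, Module.finrank F (torsionBy R (M i) a) := by
  let φ : torsionBy R (∀ i, M i) a ≃ₗ[F] ∀ i, torsionBy R (M i) a :=
    { toFun x i := ⟨x.1 i, congrFun x.2 i⟩
      invFun x := ⟨fun i => x i, funext fun i => (x i).2⟩
      map_add' _ _ := rfl
      map_smul' _ _ := rfl }
  have (i : ι) : FiniteDimensional F (torsionBy R (M i) a) :=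
    inferInstanceAs (FiniteDimensional F ((torsionBy R (M i) a).restrictScalars F))
  rw [φ.finrank_eq, Module.finrank_pi_fintype]

theorem nonempty_linearEquiv_pi_subtype {R ι : Type*} [Semiring R] {M : ι → Type*}
    [∀ i, AddCommMonoid (M i)] [∀ i, Module R (M i)] (P : ι → Prop)
    (h : ∀ i, ¬ P i → Subsingleton (M i)) :
    Nonempty ((∀ i, M i) ≃ₗ[R] ∀ i : {i // P i}, M i) := by
  classical
  refine ⟨.ofBijective (LinearMap.pi fun i => LinearMap.proj i.1) ⟨fun x y hxy => ?_, fun x => ?_⟩⟩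
  · funext i
    by_cases hi : P i
    · exact congrFun hxy ⟨i, hi⟩
    · exact (h i hi).elim _ _
  · exact ⟨fun i => if hi : P i then x ⟨i, hi⟩ else 0, funext fun i => dif_pos i.2⟩

theorem exists_linearEquiv_pi_quotient_monic_pow {F : Type u} {M : Type*} [Field F]
    [AddCommGroup M] [Module F[X] M] [Module.Finite F[X] M] (hM : Module.IsTorsion F[X] M) :
    ∃ (ι : Type u) (_ : Fintype ι) (p : ι → F[X]) (e : ι → ℕ),
      (∀ i, (p i).Monic ∧ Irreducible (p i)) ∧ (∀ i, 0 < e i) ∧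
        Nonempty (M ≃ₗ[F[X]] ∀ i, F[X] ⧸ Ideal.span {p i ^ e i}) := by
  classical
  obtain ⟨ι, _, p, hp, e, ⟨L⟩⟩ := Module.equiv_directSum_of_isTorsion hM
  have htrivial (i : ι) (hi : ¬ 0 < e i) : Subsingleton (F[X] ⧸ F[X] ∙ p i ^ e i) := by
    rw [Submodule.Quotient.subsingleton_iff, Nat.eq_zero_of_not_pos hi, pow_zero]
    exact Ideal.span_singleton_one
  obtain ⟨Φ⟩ := nonempty_linearEquiv_pi_subtype (R := F[X]) _ htrivial
  have hspan (i : ι) : F[X] ∙ p i ^ e i = Ideal.span {normalize (p i) ^ e i} :=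
    Ideal.span_singleton_eq_span_singleton.2 (normalize_associated _).symm.pow_pow
  exact ⟨{i // 0 < e i}, inferInstance, fun i => normalize (p i), fun i => e i, fun i =>
    ⟨monic_normalize (hp _).ne_zero, (normalize_associated _).symm.irreducible (hp _)⟩,
    fun i => i.2, ⟨(L.trans (DirectSum.linearEquivFunOnFintype F[X] ι _)).trans
      (Φ.trans (.piCongrRight fun i => quotEquivOfEq _ _ (hspan i)))⟩⟩

theorem finrank_torsionBy_pow_of_linearEquiv_pi {M ι : Type*} [AddCommGroup M] [Module F[X] M]
    [Module F M] [IsScalarTower F F[X] M] [Fintype ι] {p : ι → F[X]} {e : ι → ℕ}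
    (hp : ∀ i, (p i).Monic ∧ Irreducible (p i))
    (L : M ≃ₗ[F[X]] ∀ i, F[X] ⧸ Ideal.span {p i ^ e i}) {q : F[X]} (hq : q.Monic)
    (hqi : Irreducible q) (j : ℕ) [DecidableEq F[X]] :
    Module.finrank F (torsionBy F[X] M (q ^ j)) =
      q.natDegree * ∑ i with p i = q, min (e i) j := by
  have (i : ι) : FiniteDimensional F (F[X] ⧸ Ideal.span {p i ^ e i}) :=
    ((hp i).1.pow (e i)).finite_quotient
  simp_rw [finrank_torsionBy_congr L, finrank_torsionBy_pi,
    finrank_torsionBy_quotient_pow (hp _).1 (hp _).2 hq hqi, Finset.mul_sum, Finset.sum_filter]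

theorem nonempty_linearEquiv_of_finrank_torsionBy_eq {M N : Type*} [AddCommGroup M]
    [Module F[X] M] [Module F M] [IsScalarTower F F[X] M] [Module.Finite F[X] M]
    [AddCommGroup N] [Module F[X] N] [Module F N] [IsScalarTower F F[X] N]
    [Module.Finite F[X] N] (hM : Module.IsTorsion F[X] M) (hN : Module.IsTorsion F[X] N)
    (h : ∀ q : F[X], q.Monic → Irreducible q → ∀ j,
      Module.finrank F (torsionBy F[X] M (q ^ j)) = Module.finrank F (torsionBy F[X] N (q ^ j))) :
    Nonempty (M ≃ₗ[F[X]] N) := by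
  classical
  obtain ⟨ι, _, p, e, hp, he, ⟨L⟩⟩ := exists_linearEquiv_pi_quotient_monic_pow hM
  obtain ⟨ι', _, p', e', hp', he', ⟨L'⟩⟩ := exists_linearEquiv_pi_quotient_monic_pow hN
  obtain ⟨E, hE⟩ : ∃ E : ι ≃ ι', ∀ i, (p' (E i), e' (E i)) = (p i, e i) := by
    refine exists_equiv_of_sum_min_eq he he' fun q j => ?_
    by_cases hq : q.Monic ∧ Irreducible q
    · refine Nat.eq_of_mul_eq_mul_left hq.2.natDegree_pos ?_
      rw [← finrank_torsionBy_pow_of_linearEquiv_pi hp L hq.1 hq.2,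
        ← finrank_torsionBy_pow_of_linearEquiv_pi hp' L' hq.1 hq.2, h q hq.1 hq.2]
    · have hpq (i : ι) : p i ≠ q := fun hi => hq (hi ▸ hp i)
      have hpq' (i : ι') : p' i ≠ q := fun hi => hq (hi ▸ hp' i)
      simp [hpq, hpq']
  obtain rfl : p = fun i => p' (E i) := funext fun i => (congrArg Prod.fst (hE i)).symm
  obtain rfl : e = fun i => e' (E i) := funext fun i => (congrArg Prod.snd (hE i)).symm
  exact ⟨L.trans ((LinearEquiv.piCongrLeft F[X]
    (fun i => F[X] ⧸ Ideal.span {p' i ^ e' i}) E).trans L'.symm)⟩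

theorem nonempty_linearEquiv_aeval_of_finrank_ker_eq {V V' : Type*} [AddCommGroup V] [Module F V]
    [FiniteDimensional F V] [AddCommGroup V'] [Module F V'] [FiniteDimensional F V']
    {T : V →ₗ[F] V} {T' : V' →ₗ[F] V'}
    (h : ∀ q : F[X], q.Monic → Irreducible q → ∀ j,
      Module.finrank F (LinearMap.ker (aeval T (q ^ j))) =
        Module.finrank F (LinearMap.ker (aeval T' (q ^ j)))) :
    Nonempty (Module.AEval' T ≃ₗ[F[X]] Module.AEval' T') :=
  nonempty_linearEquiv_of_finrank_torsionBy_eq (F := F)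
    (Module.AEval.isTorsion_of_finiteDimensional F V T)
    (Module.AEval.isTorsion_of_finiteDimensional F V' T') h

end Field

end ElementaryDivisors

section Composition

open Polynomial

theorem not_dvd_comp_of_isCoprime {R : Type*} [CommRing R] {p a b g : R[X]} (hp : ¬ IsUnit p)
    (hab : IsCoprime a b) (h : p ∣ a.comp g) : ¬ p ∣ b.comp g := fun hb =>
  hp ((hab.map (compRingHom g)).isUnit_of_dvd' h hb)

theorem sub_dvd_comp_sub {R : Type*} [CommRing R] (f g q : R[X]) :
    f - g ∣ q.comp f - q.comp g := by
  simpa [eval_map, comp] using sub_dvd_eval_sub f g (q.map C)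

variable {F : Type*} [Field F]

theorem exists_dvd_comp_of_natDegree_dvd [Finite F] {p q : F[X]} (hp : Irreducible p)
    (hq : Irreducible q) (hdeg : q.natDegree ∣ p.natDegree) : ∃ f, p ∣ q.comp f := by
  have : Fact (Irreducible p) := ⟨hp⟩
  have : Fact (Irreducible q) := ⟨hq⟩
  have hfinrank (r : F[X]) : Module.finrank F (AdjoinRoot r) = r.natDegree :=
    finrank_quotient_span_eq_natDegree
  have : Module.Finite F (AdjoinRoot p) := (AdjoinRoot.powerBasis hp.ne_zero).finite
  have : Finite (AdjoinRoot p) := Module.finite_of_finite F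
  obtain ⟨φ⟩ := FiniteField.nonempty_algHom_of_finrank_dvd (F := F) (K := AdjoinRoot q)
    (L := AdjoinRoot p) (by rwa [hfinrank, hfinrank])
  obtain ⟨f, hf⟩ := AdjoinRoot.mk_surjective (φ (AdjoinRoot.root q))
  refine ⟨f, AdjoinRoot.mk_eq_zero.1 ?_⟩
  calc AdjoinRoot.mk p (q.comp f) = aeval (AdjoinRoot.mk p f) q := by
        rw [comp_eq_aeval]
        exact (aeval_algHom_apply (AdjoinRoot.mkₐ p) f q).symm
    _ = φ (aeval (AdjoinRoot.root q) q) := by rw [hf, aeval_algHom_apply]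
    _ = 0 := by rw [AdjoinRoot.aeval_eq, AdjoinRoot.mk_self, map_zero]

theorem exists_dvd_comp_and_not_sq_dvd_comp {p q f : F[X]} (hp : Irreducible p)
    (hq : q.Separable) (hf : p ∣ q.comp f) : ∃ g, p ∣ q.comp g ∧ ¬ p ^ 2 ∣ q.comp g := by
  by_cases hsq : p ^ 2 ∣ q.comp f
  swap
  · exact ⟨f, hf, hsq⟩
  -- Hensel: moving `f` to `f + p` changes `q ∘ f` by `q' ∘ f * p` modulo `p ^ 2`.
  obtain ⟨k, hk⟩ : ∃ k, q.comp (f + p) = q.comp f + (derivative q).comp f * p + k * p ^ 2 := by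
    obtain ⟨k, hk⟩ := binomExpansion (q.map C) f p
    exact ⟨k, by simpa [derivative_map, eval_map, comp] using hk⟩
  refine ⟨f + p, (dvd_iff_dvd_of_dvd_sub ?_).1 hf, fun h => ?_⟩
  · rw [dvd_sub_comm]
    simpa using (sub_dvd_comp_sub (f + p) f q)
  have hmul : p * p ∣ (derivative q).comp f * p := by
    rw [hk, dvd_add_left (dvd_mul_left _ k), dvd_add_right hsq] at h
    rwa [← sq]
  exact not_dvd_comp_of_isCoprime hp.not_isUnit hq hf
    ((mul_dvd_mul_iff_right hp.ne_zero).1 hmul)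

theorem exists_forall_dvd_comp_and_not_sq_dvd_comp [Finite F] {ι : Type*} [Finite ι]
    {p q : ι → F[X]} (hp : ∀ i, Irreducible (p i)) (hpp : Pairwise fun i j => IsCoprime (p i) (p j))
    (hq : ∀ i, Irreducible (q i)) (hdeg : ∀ i, (q i).natDegree ∣ (p i).natDegree) :
    ∃ g, ∀ i, p i ∣ (q i).comp g ∧ ¬ p i ^ 2 ∣ (q i).comp g := by
  have hlocal (i : ι) : ∃ r, p i ∣ (q i).comp r ∧ ¬ p i ^ 2 ∣ (q i).comp r := by
    obtain ⟨f, hf⟩ := exists_dvd_comp_of_natDegree_dvd (hp i) (hq i) (hdeg i)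
    exact exists_dvd_comp_and_not_sq_dvd_comp (hp i)
      (PerfectField.separable_of_irreducible (hq i)) hf
  choose r hr hr2 using hlocal
  obtain ⟨g, hg⟩ := Ideal.exists_forall_sub_mem_ideal
    (I := fun i => Ideal.span {p i ^ 2})
    (fun i j hij => (Ideal.isCoprime_span_singleton_iff _ _).2 (hpp hij).pow) r
  have hcomp (i : ι) : p i ^ 2 ∣ (q i).comp g - (q i).comp (r i) :=
    (Ideal.mem_span_singleton.1 (hg i)).trans (sub_dvd_comp_sub _ _ _)
  exact ⟨g, fun i => ⟨(dvd_iff_dvd_of_dvd_sub ((dvd_pow_self _ two_ne_zero).trans (hcomp i))).2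
    (hr i), fun h => hr2 i ((dvd_iff_dvd_of_dvd_sub (hcomp i)).1 h)⟩⟩

theorem exists_forall_comp_eq_mul [Finite F] {ι : Type*} [Finite ι] {p q : ι → F[X]}
    (hp : ∀ i, Irreducible (p i)) (hpp : Pairwise fun i j => IsCoprime (p i) (p j))
    (hq : ∀ i, Irreducible (q i)) (hqq : Pairwise fun i j => IsCoprime (q i) (q j))
    (hdeg : ∀ i, (q i).natDegree ∣ (p i).natDegree) :
    ∃ g, ∀ i, ∃ c, (q i).comp g = p i * c ∧ ∀ j, ¬ p j ∣ c := by
  obtain ⟨g, hg⟩ := exists_forall_dvd_comp_and_not_sq_dvd_comp hp hpp hq hdeg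
  refine ⟨g, fun i => ?_⟩
  obtain ⟨c, hc⟩ := (hg i).1
  refine ⟨c, hc, fun j hj => ?_⟩
  obtain rfl | hij := eq_or_ne i j
  · exact (hg i).2 (by rw [hc, sq]; exact mul_dvd_mul_left _ hj)
  · exact not_dvd_comp_of_isCoprime (hp j).not_isUnit (hqq hij.symm) (hg j).1
      (hc ▸ hj.mul_left _)

theorem exists_comp_eq_mul_of_equiv [Finite F] {s s' : Finset F[X]}
    (hs : ∀ p ∈ s, p.Monic ∧ Irreducible p) (hs' : ∀ p ∈ s', p.Monic ∧ Irreducible p)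
    (π : s ≃ s') (hdeg : ∀ p, (π p).1.natDegree ∣ p.1.natDegree) :
    ∃ g : F[X], (∀ p : s, ∃ c, (π p).1.comp g = p * c ∧ ∀ r ∈ s, ¬ r ∣ c) ∧
      ∀ q : F[X], q.Monic → Irreducible q → q ∉ s' → ∀ p ∈ s, ¬ p ∣ q.comp g := by
  have hcop {p q : F[X]} (hp : p.Monic ∧ Irreducible p) (hq : q.Monic ∧ Irreducible q)
      (hpq : p ≠ q) : IsCoprime p q :=
    isCoprime_of_monic_of_irreducible_of_ne hp.1 hp.2 hq.1 hq.2 hpq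
  obtain ⟨g, hg⟩ := exists_forall_comp_eq_mul (p := fun p : s => p.1) (q := fun p => (π p).1)
    (fun p => (hs p p.2).2) (fun p q hpq => hcop (hs p p.2) (hs q q.2) (by simpa using hpq))
    (fun p => (hs' _ (π p).2).2)
    (fun p q hpq => hcop (hs' _ (π p).2) (hs' _ (π q).2) (by simpa using hpq)) hdeg
  choose c hc hndvd using hg
  refine ⟨g, fun p => ⟨c p, hc p, fun r hr => hndvd p ⟨r, hr⟩⟩, fun q hq hqi hqs p hp => ?_⟩
  have hne : (π ⟨p, hp⟩ : F[X]) ≠ q := fun he => hqs (he ▸ (π ⟨p, hp⟩).2)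
  exact not_dvd_comp_of_isCoprime (hs p hp).2.not_isUnit
    (hcop (hs' _ (π ⟨p, hp⟩).2) ⟨hq, hqi⟩ hne) (hc ⟨p, hp⟩ ▸ dvd_mul_right _ _)

end Composition

section SimilarityClassTypes

open Polynomial

theorem natCard_fiber_eq_count_map_val {α γ : Type*} [DecidableEq γ] (s : Finset α) (f : α → γ)
    (c : γ) : Nat.card {a : s // f a = c} = (s.val.map f).count c := by
  rw [Nat.card_eq_fintype_card, Fintype.card_subtype, Finset.card_filter,
    Finset.sum_coe_sort s fun a => if f a = c then 1 else 0, ← Finset.card_filter,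
    Multiset.count_map]
  simp_rw [eq_comm (b := c)]
  rfl

theorem exists_equiv_of_map_val_eq {α β γ : Type*} {s : Finset α} {t : Finset β} {f : α → γ}
    {g : β → γ} (h : s.val.map f = t.val.map g) : ∃ π : s ≃ t, ∀ a, g (π a) = f a := by
  classical
  refine exists_equiv_of_card_fiber_eq (fun a : s => f a) (fun b : t => g b) fun c => ?_
  rw [natCard_fiber_eq_count_map_val, natCard_fiber_eq_count_map_val, h]

variable {F V V' : Type*} [Field F] [AddCommGroup V] [Module F V] [AddCommGroup V'] [Module F V']
  {T : V →ₗ[F] V} {T' : V' →ₗ[F] V'}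

theorem ker_aeval_eq_bot_of_isCoprime_minpoly {f : F[X]} (hf : IsCoprime f (minpoly F T)) :
    LinearMap.ker (aeval T f) = ⊥ := by
  simpa using disjoint_ker_aeval_of_isCoprime T hf

theorem ker_aeval_mul_of_ker_eq_bot {f h : F[X]} (hh : LinearMap.ker (aeval T h) = ⊥) :
    LinearMap.ker (aeval T (f * h)) = LinearMap.ker (aeval T f) := by
  rw [mul_comm, map_mul, Module.End.mul_eq_comp, LinearMap.ker_comp_of_ker_eq_bot _ hh]

theorem ker_aeval_pow_eq_bot {f : F[X]} (hf : LinearMap.ker (aeval T f) = ⊥) (j : ℕ) :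
    LinearMap.ker (aeval T (f ^ j)) = ⊥ := by
  induction j with
  | zero => rw [pow_zero, map_one, Module.End.one_eq_id, LinearMap.ker_id]
  | succ j ih => rw [pow_succ, ker_aeval_mul_of_ker_eq_bot hf, ih]

variable [FiniteDimensional F V] [FiniteDimensional F V']

theorem not_dvd_minpoly_of_ker_aeval_eq_bot {p : F[X]} (hp : ¬ IsUnit p)
    (hker : LinearMap.ker (aeval T p) = ⊥) : ¬ p ∣ minpoly F T := by
  rintro ⟨c, hc⟩
  have hm : minpoly F T ≠ 0 := minpoly.ne_zero (Algebra.IsIntegral.isIntegral T)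
  have hcomp : aeval T p ∘ₗ aeval T c = 0 := by
    rw [← Module.End.mul_eq_comp, ← map_mul, ← hc, minpoly.aeval]
  have hc0 : aeval T c = 0 := LinearMap.ext fun v =>
    LinearMap.ker_eq_bot'.1 hker _ (LinearMap.congr_fun hcomp v)
  obtain ⟨r, hr⟩ := minpoly.dvd F T hc0
  have hc' : c ≠ 0 := right_ne_zero_of_mul (hc ▸ hm)
  refine hp (.of_mul_eq_one r (mul_left_cancel₀ hc' ?_))
  rw [mul_one, mul_left_comm, ← mul_assoc, ← hc, ← hr]

theorem ker_aeval_eq_bot_of_forall_not_dvd {s : Set F[X]}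
    (hs : ∀ p : F[X], p.Monic → Irreducible p → p ∉ s → LinearMap.ker (aeval T p) = ⊥)
    {f : F[X]} (hf : ∀ p ∈ s, ¬ p ∣ f) : LinearMap.ker (aeval T f) = ⊥ := by
  classical
  refine ker_aeval_eq_bot_of_isCoprime_minpoly ?_
  rw [← EuclideanDomain.gcd_isUnit_iff]
  by_contra hgcd
  obtain ⟨p, hp, hpi, hdvd⟩ := exists_monic_irreducible_factor _ hgcd
  exact not_dvd_minpoly_of_ker_aeval_eq_bot hpi.not_isUnit
    (hs p hp hpi fun hps => hf p hps (hdvd.trans (EuclideanDomain.gcd_dvd_left _ _)))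
    (hdvd.trans (EuclideanDomain.gcd_dvd_right _ _))

theorem exists_nonempty_linearEquiv_aeval_of_hasType [Finite F] {τ : Multiset (ℕ × Multiset ℕ)}
    (h : HasType τ T) (h' : HasType τ T') :
    ∃ g : F[X], Nonempty (Module.AEval' (aeval T g) ≃ₗ[F[X]] Module.AEval' T') := by
  obtain ⟨s, l, hs, -, hτ, hker, hker_bot⟩ := h
  obtain ⟨s', l', hs', -, hτ', hker', hker_bot'⟩ := h'
  obtain ⟨π, hπ⟩ := exists_equiv_of_map_val_eq (hτ.symm.trans hτ')
  have hdeg (p : s) : (π p).1.natDegree = p.1.natDegree := congrArg Prod.fst (hπ p)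
  have hpart (p : s) : l' (π p) = l p := congrArg Prod.snd (hπ p)
  obtain ⟨g, hg, hg'⟩ := exists_comp_eq_mul_of_equiv hs hs' π fun p => (hdeg p).dvd
  refine ⟨g, nonempty_linearEquiv_aeval_of_finrank_ker_eq fun q hq hqi j => ?_⟩
  rw [← aeval_comp, pow_comp]
  by_cases hqs : q ∈ s'
  · obtain ⟨p, rfl⟩ : ∃ p, (π p).1 = q := ⟨π.symm ⟨q, hqs⟩, by simp⟩
    obtain ⟨c, hc, hndvd⟩ := hg p
    have hker_c := ker_aeval_eq_bot_of_forall_not_dvd hker_bot hndvd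
    rw [hc, mul_pow, ker_aeval_mul_of_ker_eq_bot (ker_aeval_pow_eq_bot hker_c j), hker p p.2,
      hker' _ hqs, hdeg, hpart]
  · have hker_q := ker_aeval_eq_bot_of_forall_not_dvd hker_bot (hg' q hq hqi hqs)
    rw [ker_aeval_pow_eq_bot hker_q, ker_aeval_pow_eq_bot (hker_bot' q hq hqi hqs), finrank_bot,
      finrank_bot]

theorem exists_addEquiv_forall_mem_span_singleton [Finite F] {τ : Multiset (ℕ × Multiset ℕ)}
    (h : HasType τ T) (h' : HasType τ T') :
    ∃ ε : Module.AEval' T' ≃+ Module.AEval' T, ∀ x y, x ∈ F[X] ∙ y → ε x ∈ F[X] ∙ ε y := by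
  obtain ⟨g, ⟨φ⟩⟩ := exists_nonempty_linearEquiv_aeval_of_hasType h h'
  refine ⟨φ.symm.toAddEquiv.trans
    ((Module.AEval'.of (aeval T g)).symm.trans (Module.AEval'.of T)).toAddEquiv, fun x y hx => ?_⟩
  obtain ⟨f, rfl⟩ := Submodule.mem_span_singleton.1 hx
  refine Submodule.mem_span_singleton.2 ⟨f.comp g, ?_⟩
  have hof (v : Module.AEval' (aeval T g)) :
      Module.AEval'.of T ((Module.AEval'.of (aeval T g)).symm (f • v)) =
        f.comp g • Module.AEval'.of T ((Module.AEval'.of (aeval T g)).symm v) := by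
    rw [Module.AEval.of_symm_smul, ← Module.AEval.of_aeval_smul, aeval_comp]
  change _ = Module.AEval'.of T ((Module.AEval'.of (aeval T g)).symm (φ.symm (f • y)))
  rw [map_smul, hof]
  rfl

theorem exists_preservesCyclic_of_hasType [Finite F] {τ : Multiset (ℕ × Multiset ℕ)}
    (h : HasType τ T) (h' : HasType τ T') :
    ∃ e : Module.AEval' T ≃+ Module.AEval' T', PreservesCyclic F[X] F[X] e := by
  have : Finite (Module.AEval' T) := Module.finite_of_finite F
  have : Finite (Module.AEval' T') := Module.finite_of_finite F
  obtain ⟨ε, hε⟩ := exists_addEquiv_forall_mem_span_singleton h h'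
  obtain ⟨e, he⟩ := exists_addEquiv_forall_mem_span_singleton h' h
  exact ⟨e, .of_forall_mem he hε⟩

end SimilarityClassTypes

/-- operators of the same similarity class type on `md`-dimensional
spaces have the same number of `m`-dimensional splitting subspaces. -/
theorem splitCount_eq_of_same_type (F V V' : Type*) [Field F] [Fintype F]
    [AddCommGroup V] [Module F V] [FiniteDimensional F V]
    [AddCommGroup V'] [Module F V'] [FiniteDimensional F V']
    (m d : ℕ) (hm : 0 < m) (hd : 0 < d)
    (hdim : Module.finrank F V = m * d) (hdim' : Module.finrank F V' = m * d)
    (T : V →ₗ[F] V) (T' : V' →ₗ[F] V')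
    (h : ∃ τ : Multiset (ℕ × Multiset ℕ), HasType τ T ∧ HasType τ T') :
    splitCount T m d = splitCount T' m d := by
  obtain ⟨τ, hT, hT'⟩ := h
  obtain ⟨e, he⟩ := exists_preservesCyclic_of_hasType hT hT'
  exact splitCount_eq_of_preservesCyclic hd hdim hdim' he
end
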